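/- arXiv:1708.03924 — 6 statements merged into one kernel-verified Lean document; each statement's English description precedes it below -/
import Mathlib

section
/- Let g be a continuous complex-valued function on the closed unit disk with ‖g‖_∞ = sup_{z∈𝔻}|g(z)|, and let G_g(z) = (1/(2π))∫_𝔻 G(z,w) g(w) dA(w) be its Green potential. Then for every z ∈ 𝔻: |G_g(z)| ≤ (‖g‖_∞/4)·(1−|z|²). -/
open Metric MeasureTheory Set Filter

noncomputable section

/-- The Wirtinger derivative `∂f/∂z = (f_x - i f_y)/2`. -/
def wdz (f : ℂ → ℂ) (z : ℂ) : ℂ :=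
  (fderiv ℝ f z 1 - Complex.I * fderiv ℝ f z Complex.I) / 2

/-- The Wirtinger derivative `∂f/∂z̄ = (f_x + i f_y)/2`. -/
def wdzbar (f : ℂ → ℂ) (z : ℂ) : ℂ :=
  (fderiv ℝ f z 1 + Complex.I * fderiv ℝ f z Complex.I) / 2

/-- The Laplacian `Δf = f_xx + f_yy` (equivalently `4 f_{z z̄}`). -/
def lap (f : ℂ → ℂ) (z : ℂ) : ℂ :=
  fderiv ℝ (fun w => fderiv ℝ f w 1) z 1 +
    fderiv ℝ (fun w => fderiv ℝ f w Complex.I) z Complex.I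

/-- The Poisson integral `P_ψ(z) = (1/2π) ∫₀^{2π} ((1-|z|²)/|1-z e^{-it}|²) ψ(e^{it}) dt`. -/
def poissonIntegral (ψ : ℂ → ℂ) (z : ℂ) : ℂ :=
  (1 / (2 * Real.pi) : ℝ) • ∫ t in (0:ℝ)..(2 * Real.pi),
    (((1 - ‖z‖ ^ 2) / ‖1 - z * Complex.exp (-(Complex.I * (t : ℂ)))‖ ^ 2 : ℝ) : ℂ) *
      ψ (Complex.exp (Complex.I * (t : ℂ)))

/-- The Green potential `G_g(z) = (1/2π) ∫_𝔻 log|(1 - z w̄)/(z - w)| g(w) dA(w)`. -/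
def greenPotential (g : ℂ → ℂ) (z : ℂ) : ℂ :=
  (1 / (2 * Real.pi) : ℝ) • ∫ w in ball (0:ℂ) 1,
    ((Real.log ‖(1 - z * (starRingEnd ℂ) w) / (z - w)‖ : ℝ) : ℂ) * g w

/-- `sup_{z ∈ 𝔻} |g(z)|`. -/
def supD (g : ℂ → ℂ) : ℝ := sSup ((fun z => ‖g z‖) '' ball (0:ℂ) 1)

/-- The function `μ(r)` with constant `c` in place of `‖g‖_∞`. -/
def mu (c r : ℝ) : ℝ :=
  c * (1 - r ^ 2) / (8 * r ^ 2) *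
    ((1 + r ^ 2) / (1 - r ^ 2) - (1 - r ^ 2) / (2 * r) * Real.log ((1 + r) / (1 - r)))

lemma aux_nonneg {z w : ℂ} (hz : ‖z‖ < 1) (hw : ‖w‖ < 1) :
    0 ≤ Real.log ‖(1 - z * (starRingEnd ℂ) w) / (z - w)‖ := by
  by_cases h : z - w = 0
  · simp [h]
  · apply Real.log_nonneg
    rw [norm_div, one_le_div (norm_pos_iff.2 h)]
    refine (sq_le_sq₀ (norm_nonneg _) (norm_nonneg _)).1 ?_
    have h1 : ‖z‖ ^ 2 < 1 := by nlinarith [norm_nonneg z]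
    have h2 : ‖w‖ ^ 2 < 1 := by nlinarith [norm_nonneg w]
    rw [← Complex.normSq_eq_norm_sq, Complex.normSq_apply] at *
    rw [← Complex.normSq_eq_norm_sq, Complex.normSq_apply] at *
    simp at *
    nlinarith [mul_pos (sub_pos.2 h1) (sub_pos.2 h2)]

lemma aux_norm_conj (z w : ℂ) :
    ‖1 - z * (starRingEnd ℂ) w‖ = ‖1 - (starRingEnd ℂ) z * w‖ := by
  rw [← Complex.norm_conj]; simp

lemma aux_avg {z : ℂ} (hz : ‖z‖ < 1) {r : ℝ} (hr : 0 < r) (hr1 : r < 1) (hne : r ≠ ‖z‖) :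
    CircleIntegrable (fun w => Real.log ‖(1 - z * (starRingEnd ℂ) w) / (z - w)‖) 0 r ∧
    Real.circleAverage (fun w => Real.log ‖(1 - z * (starRingEnd ℂ) w) / (z - w)‖) 0 r
      = - Real.log (max r ‖z‖) := by
  have hlt : ∀ w : ℂ, ‖w‖ ≤ r → 1 - (starRingEnd ℂ) z * w ≠ 0 := by
    intro w hw h0
    have : (1:ℂ) = (starRingEnd ℂ) z * w := by linear_combination h0
    have h2 : (1:ℝ) = ‖z‖ * ‖w‖ := by
      rw [← Complex.norm_conj z, ← norm_mul, ← this, norm_one]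
    nlinarith [norm_nonneg z, norm_nonneg w]
  have hEq : Set.EqOn ((fun w => Real.log ‖1 - (starRingEnd ℂ) z * w‖) - (fun w => Real.log ‖w - z‖))
      (fun w => Real.log ‖(1 - z * (starRingEnd ℂ) w) / (z - w)‖) (sphere 0 |r|) := by
    intro w hw
    have hw' : ‖w‖ = r := by simpa [abs_of_pos hr] using hw
    have h1 : ‖1 - (starRingEnd ℂ) z * w‖ ≠ 0 := norm_ne_zero_iff.2 (hlt w hw'.le)
    have h2 : ‖z - w‖ ≠ 0 := by
      rw [norm_ne_zero_iff, sub_ne_zero]; rintro rfl; exact hne hw'.symm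
    simp only [Pi.sub_apply]
    rw [norm_div, aux_norm_conj, Real.log_div h1 h2, norm_sub_rev z w]
  have i1 : CircleIntegrable (fun w => Real.log ‖1 - (starRingEnd ℂ) z * w‖) 0 r :=
    MeromorphicOn.circleIntegrable_log_norm (fun z hz ↦ by fun_prop)
  have i2 : CircleIntegrable (fun w => Real.log ‖w - z‖) 0 r :=
    circleIntegrable_log_norm_sub_const r
  have a1 : Real.circleAverage (fun w => Real.log ‖1 - (starRingEnd ℂ) z * w‖) 0 r = 0 := by
    rw [InnerProductSpace.HarmonicOnNhd.circleAverage_eq]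
    · simp
    · intro x hx
      apply AnalyticAt.harmonicAt_log_norm (by fun_prop)
      apply hlt
      simpa [abs_of_pos hr] using hx
  refine ⟨(i1.sub i2).congr (fun θ _ => hEq (circleMap_mem_sphere' 0 r θ)), ?_⟩
  rw [← Real.circleAverage_congr_sphere hEq, Real.circleAverage_sub i1 i2, a1,
    circleAverage_log_norm_sub_const_eq_log_radius_add_posLog hr.ne']
  simp only [zero_sub, norm_neg, neg_inj]
  rcases lt_or_gt_of_ne hne with h | h
  · rw [max_eq_right h.le, Real.posLog_eq_log, Real.log_mul, Real.log_inv]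
    · ring
    · positivity
    · linarith
    · rw [abs_of_nonneg (by positivity), ← div_eq_inv_mul, one_le_div hr]; exact h.le
  · rw [max_eq_left h.le, (Real.posLog_eq_zero_iff _).2, add_zero]
    rw [abs_of_nonneg (by positivity), ← div_eq_inv_mul, div_le_one hr]; exact h.le

lemma aux_inner {z : ℂ} (hz : ‖z‖ < 1) {r : ℝ} (hr : 0 < r) (hr1 : r < 1) (hne : r ≠ ‖z‖) :
    ∫⁻ θ in Ioo (-Real.pi) Real.pi, ENNReal.ofReal
      (Real.log ‖(1 - z * (starRingEnd ℂ) (circleMap 0 r θ)) / (z - circleMap 0 r θ)‖)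
      = ENNReal.ofReal (2 * Real.pi * (- Real.log (max r ‖z‖))) := by
  obtain ⟨hi, ha⟩ := aux_avg hz hr hr1 hne
  set f : ℂ → ℝ := fun w => Real.log ‖(1 - z * (starRingEnd ℂ) w) / (z - w)‖ with hf
  have hper : (fun θ ↦ f (circleMap 0 r θ)).Periodic (2 * Real.pi) :=
    fun x ↦ by simp [periodic_circleMap 0 r x]
  have hpi := Real.pi_pos
  have hii : IntervalIntegrable (fun θ ↦ f (circleMap 0 r θ)) volume (-Real.pi) Real.pi :=
    hper.intervalIntegrable₀ Real.two_pi_pos.ne' hi _ _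
  have hint : ∫ θ in (-Real.pi)..Real.pi, f (circleMap 0 r θ)
      = 2 * Real.pi * (- Real.log (max r ‖z‖)) := by
    rw [← ha, Real.circleAverage_def, smul_eq_mul, mul_inv_cancel_left₀ (by positivity)]
    have := hper.intervalIntegral_add_eq 0 (-Real.pi)
    rw [zero_add] at this
    rw [this]; congr 1; ring
  rw [← hint, intervalIntegral.integral_of_le (by linarith), integral_Ioc_eq_integral_Ioo,
    ofReal_integral_eq_lintegral_ofReal]
  · exact ((intervalIntegrable_iff_integrableOn_Ioo_of_le (by linarith)).1 hii)
  · refine Eventually.of_forall fun θ => aux_nonneg hz ?_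
    simpa [abs_of_pos hr] using hr1

lemma aux_radial {ρ : ℝ} (h0 : 0 ≤ ρ) (h1 : ρ < 1) :
    IntervalIntegrable (fun r => r * (2 * Real.pi * (- Real.log (max r ρ)))) volume 0 1 ∧
    ∫ r in (0:ℝ)..1, r * (2 * Real.pi * (- Real.log (max r ρ))) = Real.pi / 2 * (1 - ρ ^ 2) := by
  have hc : ContinuousOn (fun r => r * Real.log (max r ρ)) (Icc 0 1) := by
    rcases h0.eq_or_lt with h | h
    · subst h
      apply Real.continuous_mul_log.continuousOn.congr
      intro r hr
      simp [max_eq_left hr.1]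
    · apply Continuous.continuousOn
      refine continuous_id.mul (Continuous.log (by fun_prop) ?_)
      intro x; exact (lt_of_lt_of_le h (le_max_right _ _)).ne'
  have hc' : ContinuousOn (fun r => r * (2 * Real.pi * (- Real.log (max r ρ)))) (Icc 0 1) := by
    have := hc.const_smul (-(2 * Real.pi))
    refine this.congr fun r _ => ?_
    simp; ring
  have hii := hc'.intervalIntegrable_of_Icc (μ := volume) zero_le_one
  refine ⟨hii, ?_⟩
  have hF : ContinuousOn (fun r => -(2 * Real.pi) * (r / 2 * (r * Real.log (max r ρ)) - (max r ρ) ^ 2 / 4))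
      (Icc 0 1) := by
    refine continuousOn_const.mul (ContinuousOn.sub (ContinuousOn.mul (by fun_prop) hc) (by fun_prop))
  have key := integral_eq_of_hasDerivAt_off_countable _
    (fun r => r * (2 * Real.pi * (- Real.log (max r ρ)))) (a := 0) (b := 1) (s := {ρ})
    (countable_singleton ρ) (by rwa [uIcc_of_le zero_le_one]) ?_ hii
  · rw [key, max_eq_left h1.le, max_eq_right h0]; simp; ring
  · intro x hx
    simp only [zero_le_one, min_eq_left, max_eq_right, Set.mem_sdiff, mem_Ioo, mem_singleton_iff] at hx
    obtain ⟨⟨hx0, hx1⟩, hxne⟩ := hx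
    rcases lt_or_gt_of_ne hxne with h | h
    · have e : (fun r => -(2 * Real.pi) * (r / 2 * (r * Real.log (max r ρ)) - (max r ρ) ^ 2 / 4))
          =ᶠ[nhds x] (fun r => -(2 * Real.pi) * (r ^ 2 * (Real.log ρ / 2) - ρ ^ 2 / 4)) := by
        filter_upwards [Iio_mem_nhds h] with r hr
        rw [max_eq_right (le_of_lt hr)]; ring
      refine HasDerivAt.congr_of_eventuallyEq ?_ e
      rw [max_eq_right h.le]
      have := ((((hasDerivAt_id x).pow 2).mul_const (Real.log ρ / 2)).sub_const (ρ ^ 2 / 4)).const_mul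
        (-(2 * Real.pi))
      refine HasDerivAt.congr_deriv this ?_
      simp; ring
    · have e : (fun r => -(2 * Real.pi) * (r / 2 * (r * Real.log (max r ρ)) - (max r ρ) ^ 2 / 4))
          =ᶠ[nhds x] (fun r => -(2 * Real.pi) * (r ^ 2 * Real.log r * (1 / 2) - r ^ 2 * (1 / 4))) := by
        filter_upwards [Ioi_mem_nhds h] with r hr
        rw [max_eq_left (le_of_lt hr)]; ring
      refine HasDerivAt.congr_of_eventuallyEq ?_ e
      rw [max_eq_left h.le]
      have h2 := (hasDerivAt_id x).pow 2
      have := (((h2.mul (Real.hasDerivAt_log hx0.ne')).mul_const (1 / 2)).sub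
        (h2.mul_const (1 / 4))).const_mul (-(2 * Real.pi))
      refine HasDerivAt.congr_deriv this ?_
      simp; field_simp; ring

lemma aux_lint {z : ℂ} (hz : ‖z‖ < 1) :
    ∫⁻ w in ball (0:ℂ) 1, ENNReal.ofReal (Real.log ‖(1 - z * (starRingEnd ℂ) w) / (z - w)‖)
      ≤ ENNReal.ofReal (Real.pi / 2 * (1 - ‖z‖ ^ 2)) := by
  set f : ℂ → ℝ := fun w => Real.log ‖(1 - z * (starRingEnd ℂ) w) / (z - w)‖ with hf
  rw [← lintegral_indicator measurableSet_ball, ← Complex.lintegral_comp_polarCoord_symm]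
  have hT : polarCoord.target = Ioi (0:ℝ) ×ˢ Ioo (-Real.pi) Real.pi := rfl
  rw [hT, Measure.volume_eq_prod, ← Measure.prod_restrict]
  refine (lintegral_prod_le _).trans ?_
  obtain ⟨hi, hI⟩ := aux_radial (norm_nonneg z) hz
  rw [← hI, intervalIntegral.integral_of_le zero_le_one, integral_Ioc_eq_integral_Ioo,
    ofReal_integral_eq_lintegral_ofReal]
  rotate_left
  · exact ((intervalIntegrable_iff_integrableOn_Ioo_of_le (by linarith)).1 hi)
  · refine (ae_restrict_iff' measurableSet_Ioo).2 (Eventually.of_forall fun r hr => ?_)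
    have : Real.log (max r ‖z‖) ≤ 0 :=
      Real.log_nonpos (le_max_of_le_left hr.1.le) (max_le hr.2.le hz.le)
    have hpi := Real.pi_pos
    exact mul_nonneg hr.1.le (mul_nonneg (by positivity) (by linarith))
  rw [← lintegral_indicator measurableSet_Ioo, ← lintegral_indicator measurableSet_Ioi]
  apply lintegral_mono_ae
  have hae : ∀ᵐ r : ℝ, r ≠ ‖z‖ := by
    simp [ae_iff, measure_singleton]
  filter_upwards [hae] with r hne
  by_cases hr : r ∈ Ioi (0:ℝ)
  swap
  · simp [hr]
  rw [indicator_of_mem hr]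
  have hr' : 0 < r := hr
  have hcm : ∀ θ : ℝ, Complex.polarCoord.symm (r, θ) = circleMap 0 r θ := by
    intro θ
    rw [Complex.polarCoord_symm_apply, circleMap_zero, Complex.exp_mul_I]
    simp
  simp only [hcm, smul_eq_mul]
  by_cases hr1 : r < 1
  · rw [indicator_of_mem (show r ∈ Ioo (0:ℝ) 1 from ⟨hr, hr1⟩)]
    rw [lintegral_const_mul' _ _ ENNReal.ofReal_ne_top, ENNReal.ofReal_mul hr'.le,
      ← aux_inner hz hr' hr1 hne]
    gcongr
    exact indicator_le_self _ _ _
  · have : ∀ θ : ℝ, circleMap 0 r θ ∉ ball (0:ℂ) 1 := by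
      intro θ
      simp [abs_of_pos hr']; linarith
    simp [indicator_of_notMem (this _)]

/-- Bound on the Green potential: `|G_g(z)| ≤ (‖g‖_∞/4)(1-|z|²)`. -/
theorem stmt6 (g : ℂ → ℂ) (hg : ContinuousOn g (closedBall (0:ℂ) 1)) :
    ∀ z ∈ ball (0:ℂ) 1, ‖greenPotential g z‖ ≤ supD g / 4 * (1 - ‖z‖ ^ 2) := by
  intro z hz
  have hz' : ‖z‖ < 1 := by simpa using hz
  have hbdd : BddAbove ((fun z => ‖g z‖) '' ball (0:ℂ) 1) :=
    ((isCompact_closedBall (0:ℂ) 1).bddAbove_image hg.norm).mono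
      (image_mono ball_subset_closedBall)
  have hle : ∀ w ∈ ball (0:ℂ) 1, ‖g w‖ ≤ supD g := fun w hw =>
    le_csSup hbdd ⟨w, hw, rfl⟩
  have hS : 0 ≤ supD g := (norm_nonneg _).trans (hle z hz)
  have hpi := Real.pi_pos
  have hz2 : 0 ≤ 1 - ‖z‖ ^ 2 := by nlinarith [norm_nonneg z]
  have hmain : ‖∫ w in ball (0:ℂ) 1,
      ((Real.log ‖(1 - z * (starRingEnd ℂ) w) / (z - w)‖ : ℝ) : ℂ) * g w‖
      ≤ supD g * (Real.pi / 2 * (1 - ‖z‖ ^ 2)) := by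
    rw [← ENNReal.ofReal_le_ofReal_iff (by positivity), ofReal_norm]
    refine (enorm_integral_le_lintegral_enorm _).trans ?_
    rw [ENNReal.ofReal_mul hS]
    refine le_trans ?_ (mul_le_mul_right (aux_lint hz') _)
    rw [← lintegral_const_mul' _ _ ENNReal.ofReal_ne_top]
    refine setLIntegral_mono' measurableSet_ball fun w hw => ?_
    have hK := aux_nonneg hz' (show ‖w‖ < 1 by simpa using hw)
    rw [← ENNReal.ofReal_mul hS, ← ofReal_norm, norm_mul, Complex.norm_real,
      Real.norm_of_nonneg hK, mul_comm]
    exact ENNReal.ofReal_le_ofReal (mul_le_mul_of_nonneg_right (hle w hw) hK)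
  unfold greenPotential
  rw [norm_smul, Real.norm_of_nonneg (by positivity)]
  calc _ ≤ 1 / (2 * Real.pi) * (supD g * (Real.pi / 2 * (1 - ‖z‖ ^ 2))) := by gcongr
    _ = _ := by field_simp; ring
end
end

section
/- Let g be a continuous complex-valued function on the closed unit disk with ‖g‖_∞ = sup_{z∈𝔻}|g(z)|, and let G_g(z) = (1/(2π))∫_𝔻 G(z,w) g(w) dA(w). Then for every z ∈ 𝔻 \ {0}, both |∂G_g/∂z (z)| ≤ μ(|z|) and |∂G_g/∂z̄ (z)| ≤ μ(|z|), where μ(r) = (‖g‖_∞(1−r²)/(8r²))·[(1+r²)/(1−r²) − ((1−r²)/(2r))·log((1+r)/(1−r))]. Moreover ∂G_g/∂z (z) = (1/(4π))∫_𝔻 (1−|w|²)/((z−w)(z·conj(w)−1)) g(w) dA(w). -/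
open Metric MeasureTheory Set Filter

noncomputable section

def PP (u : ℂ) : ℝ := ((√‖u‖)⁻¹) ^ 3

lemma PP_nonneg (u : ℂ) : 0 ≤ PP u := by unfold PP; positivity

lemma neg_log_le {x : ℝ} (hx : 0 ≤ x) : -Real.log x ≤ 2 * (√x)⁻¹ := by
  rcases hx.eq_or_lt with rfl | hx
  · simp
  · have h := Real.log_le_sub_one_of_pos (x := (√x)⁻¹) (by positivity)
    rw [Real.log_inv, Real.log_sqrt hx.le] at h
    linarith

lemma log_le_self' {x : ℝ} (hx : 0 ≤ x) : Real.log x ≤ x := Real.log_le_self hx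

lemma abs_log_le {x : ℝ} (hx : 0 ≤ x) : |Real.log x| ≤ x + 2 * (√x)⁻¹ := by
  have h1 := neg_log_le hx
  have h2 := Real.log_le_self hx
  have : 0 ≤ (√x)⁻¹ := by positivity
  rw [abs_le]; constructor <;> linarith

lemma log_ineq (t : ℂ) : |Real.log ‖1 + t‖ - t.re| ≤ 8 * √‖t‖ ^ 3 * (1 + (√‖1 + t‖)⁻¹) := by
  have hb : 0 ≤ (√‖1 + t‖)⁻¹ := by positivity
  have hs := Real.sq_sqrt (norm_nonneg t)
  have hs0 := Real.sqrt_nonneg ‖t‖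
  set s := √‖t‖ with hsd
  set b := (√‖1 + t‖)⁻¹ with hbd
  rcases le_or_gt ‖t‖ (1/2) with ht | ht
  · have h := Complex.norm_log_one_add_sub_self_le (z := t) (by linarith)
    have h2 := (Complex.abs_re_le_norm _).trans h
    rw [Complex.sub_re, Complex.log_re] at h2
    refine h2.trans ?_
    have h3 : (1 - ‖t‖)⁻¹ ≤ 2 := by
      rw [inv_le_comm₀ (by linarith) (by norm_num)]; linarith
    have hs1 : s ≤ 1 := by nlinarith
    have h4 : ‖t‖ ^ 2 ≤ s ^ 3 := by
      rw [← hs]; nlinarith [pow_nonneg hs0 3]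
    calc ‖t‖ ^ 2 * (1 - ‖t‖)⁻¹ / 2 ≤ ‖t‖ ^ 2 * 2 / 2 := by gcongr
      _ = ‖t‖ ^ 2 := by ring
      _ ≤ s ^ 3 := h4
      _ ≤ 8 * s ^ 3 * (1 + b) := by nlinarith [pow_nonneg hs0 3, mul_nonneg (pow_nonneg hs0 3) hb]
  · have h1 := neg_log_le (norm_nonneg (1 + t))
    have h2 : Real.log ‖1 + t‖ ≤ ‖t‖ := by
      rcases eq_or_ne (1 + t) 0 with h0 | h0
      · rw [h0]; simp
      · have := Real.log_le_sub_one_of_pos (norm_pos_iff.2 h0)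
        have h3 := norm_add_le 1 t
        simp at h3
        linarith
    have h3 := Complex.abs_re_le_norm t
    rw [abs_le] at h3
    rw [← hbd] at h1
    have h7 : 7/10 ≤ s := by
      by_contra hc; push Not at hc; nlinarith
    have h8 : 2 * ‖t‖ ≤ 8 * s ^ 3 := by rw [← hs]; nlinarith [sq_nonneg s]
    have h9 : 2 * b ≤ 8 * s ^ 3 * b := by
      apply mul_le_mul_of_nonneg_right _ hb
      have : (7/10:ℝ) ^ 3 ≤ s ^ 3 := by gcongr
      norm_num at this; linarith
    rw [abs_le]; constructor <;> nlinarith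

lemma log_diff (u h : ℂ) (hu : u ≠ 0) (huh : u + h ≠ 0) :
    |Real.log ‖u + h‖ - Real.log ‖u‖ - (h / u).re| ≤ 16 * √‖h‖ ^ 3 * (PP u + PP (u + h)) := by
  have h0 : 0 < ‖u‖ := norm_pos_iff.2 hu
  have h1 : 0 < ‖u + h‖ := norm_pos_iff.2 huh
  have e : 1 + h / u = (u + h) / u := by field_simp
  have := log_ineq (h / u)
  rw [e, norm_div, norm_div, Real.log_div h1.ne' h0.ne'] at this
  refine this.trans ?_
  rw [Real.sqrt_div' _ h0.le, Real.sqrt_div' _ h0.le]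
  unfold PP
  have ha : 0 < √‖u‖ := by positivity
  have hb : 0 < √‖u + h‖ := by positivity
  have hc := Real.sqrt_nonneg ‖h‖
  set c := √‖h‖
  have e2 : 8 * (c / √‖u‖) ^ 3 * (1 + (√‖u + h‖ / √‖u‖)⁻¹)
     = c ^ 3 * (8 * ((√‖u‖)⁻¹ ^ 3 + (√‖u‖)⁻¹ ^ 2 * (√‖u + h‖)⁻¹)) := by
    field_simp
  rw [e2]
  have ha' : 0 < (√‖u‖)⁻¹ := by positivity
  have hb' : 0 < (√‖u + h‖)⁻¹ := by positivity
  generalize (√‖u‖)⁻¹ = a at *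
  generalize (√‖u + h‖)⁻¹ = b at *
  have : a ^ 2 * b ≤ a ^ 3 + b ^ 3 := by
    nlinarith [mul_nonneg (add_pos ha' hb').le (sq_nonneg (a - b)), mul_pos (mul_pos ha' hb') hb', pow_pos ha' 3, pow_pos hb' 3, mul_pos (mul_pos ha' hb') ha']
  calc c ^ 3 * (8 * (a ^ 3 + a ^ 2 * b)) ≤ c ^ 3 * (16 * (a ^ 3 + b ^ 3)) := by
        gcongr ?_ * ?_
        nlinarith [pow_pos hb' 3]
    _ = _ := by ring

lemma PP_meas : Measurable PP := by unfold PP; fun_prop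

lemma PP_int (R : ℝ) : IntegrableOn PP (ball 0 R) := by
  apply integrableOn_ball_of_norm_le_rpow (C := 1) (α := 3/2) (by simp)
  · simp; norm_num
  · filter_upwards with u
    rw [Real.norm_of_nonneg (PP_nonneg u), one_mul]
    unfold PP
    rw [Real.rpow_neg (norm_nonneg _), Real.sqrt_eq_rpow, inv_pow, ← Real.rpow_natCast, ← Real.rpow_mul (norm_nonneg _)]
    norm_num
  · exact PP_meas.aestronglyMeasurable

lemma PP_int_tr (z : ℂ) : IntegrableOn (fun w => PP (z - w)) (ball 0 1) := by
  have h := ((PP_int (‖z‖ + 1)).integrable_indicator measurableSet_ball).comp_sub_left z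
  refine (h.integrableOn (s := ball 0 1)).congr_fun ?_ measurableSet_ball
  intro w hw
  simp only [indicator]
  rw [if_pos]
  simp at hw ⊢
  exact (norm_sub_le _ _).trans_lt (by linarith)

lemma PP_bd (z : ℂ) (hz : ‖z‖ < 1) : ∫ w in ball 0 1, PP (z - w) ≤ ∫ u in ball 0 2, PP u := by
  have h := ((PP_int 2).integrable_indicator measurableSet_ball).comp_sub_left z
  rw [← integral_indicator measurableSet_ball, ← integral_indicator measurableSet_ball,
    ← integral_sub_left_eq_self (fun u => (ball 0 2).indicator PP u) volume z]
  apply integral_mono ((PP_int_tr z).integrable_indicator measurableSet_ball) h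
  intro w
  by_cases hw : w ∈ ball (0:ℂ) 1
  · have : z - w ∈ ball (0:ℂ) 2 := by
      simp at hw ⊢
      exact (norm_sub_le _ _).trans_lt (by linarith)
    simp only [indicator_of_mem hw, indicator_of_mem this]; exact le_rfl
  · rw [indicator_of_notMem hw]
    exact indicator_nonneg (fun x _ => PP_nonneg x) _

def KK (z w : ℂ) : ℂ := ((1 - ‖w‖ ^ 2 : ℝ) : ℂ) / ((z - w) * (z * (starRingEnd ℂ) w - 1))

def Ph (z w : ℂ) : ℝ := Real.log ‖(1 - z * (starRingEnd ℂ) w) / (z - w)‖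

lemma one_sub_bd {z w : ℂ} (hw : ‖w‖ < 1) : 1 - ‖z‖ ≤ ‖1 - z * (starRingEnd ℂ) w‖ := by
  have h := norm_sub_norm_le 1 (z * (starRingEnd ℂ) w)
  have h2 : ‖z * (starRingEnd ℂ) w‖ ≤ ‖z‖ := by
    rw [norm_mul, RCLike.norm_conj]
    exact mul_le_of_le_one_right (norm_nonneg _) hw.le
  simp only [norm_one] at h
  linarith

lemma one_sub_ne {z w : ℂ} (hz : ‖z‖ < 1) (hw : ‖w‖ < 1) : 1 - z * (starRingEnd ℂ) w ≠ 0 := by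
  have := one_sub_bd (z := z) hw
  exact norm_pos_iff.1 (by linarith)

lemma KK_eq {z w : ℂ} (hz : ‖z‖ < 1) (hw : ‖w‖ < 1) (hzw : z ≠ w) :
    KK z w = -(starRingEnd ℂ) w / (1 - z * (starRingEnd ℂ) w) - 1 / (z - w) := by
  have h1 := one_sub_ne hz hw
  have h2 : z - w ≠ 0 := sub_ne_zero.2 hzw
  have h3 : z * (starRingEnd ℂ) w - 1 ≠ 0 := by
    intro h; apply h1; linear_combination -h
  have h4 : ((1 - ‖w‖ ^ 2 : ℝ) : ℂ) = 1 - w * (starRingEnd ℂ) w := by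
    rw [Complex.mul_conj']; push_cast; ring
  unfold KK
  rw [h4]
  rw [div_sub_div _ _ h1 h2, div_eq_div_iff (mul_ne_zero h2 h3) (mul_ne_zero h1 h2)]
  ring

lemma Ph_eq {z w : ℂ} (hz : ‖z‖ < 1) (hw : ‖w‖ < 1) (hzw : z ≠ w) :
    Ph z w = Real.log ‖1 - z * (starRingEnd ℂ) w‖ - Real.log ‖z - w‖ := by
  have h1 := one_sub_ne hz hw
  have h2 : z - w ≠ 0 := sub_ne_zero.2 hzw
  unfold Ph
  rw [norm_div, Real.log_div (norm_ne_zero_iff.2 h1) (norm_ne_zero_iff.2 h2)]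

lemma sm_diff {z w h : ℂ} (hz : ‖z‖ < 1) (hw : ‖w‖ < 1) (hh : ‖h‖ ≤ (1 - ‖z‖) / 2) :
    |Real.log ‖1 - (z + h) * (starRingEnd ℂ) w‖ - Real.log ‖1 - z * (starRingEnd ℂ) w‖
      - (h * (-(starRingEnd ℂ) w / (1 - z * (starRingEnd ℂ) w))).re|
      ≤ 24 * √‖h‖ ^ 3 * ((√(1 - ‖z‖))⁻¹) ^ 3 := by
  have hd : 0 < 1 - ‖z‖ := by linarith
  have h1 := one_sub_ne hz hw
  have hb := one_sub_bd (z := z) hw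
  have hp : 0 < ‖1 - z * (starRingEnd ℂ) w‖ := by linarith
  set t := h * (-(starRingEnd ℂ) w / (1 - z * (starRingEnd ℂ) w)) with ht
  have e : 1 - (z + h) * (starRingEnd ℂ) w = (1 - z * (starRingEnd ℂ) w) * (1 + t) := by
    rw [ht]; field_simp; ring
  have hhw : ‖h‖ * ‖w‖ ≤ ‖h‖ := mul_le_of_le_one_right (norm_nonneg _) hw.le
  have ht1 : ‖t‖ ≤ ‖h‖ / (1 - ‖z‖) := by
    rw [ht, norm_mul, norm_div, norm_neg, RCLike.norm_conj, ← mul_div_assoc]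
    gcongr
  have ht2 : ‖t‖ ≤ 1 / 2 := by
    refine ht1.trans ?_
    rw [div_le_iff₀ hd]; linarith
  have h1t : 1 / 2 ≤ ‖1 + t‖ := by
    have := norm_sub_norm_le 1 (-t)
    simp only [norm_one, norm_neg, sub_neg_eq_add] at this
    linarith
  have hq : 0 < ‖1 + t‖ := by linarith
  rw [e, norm_mul, Real.log_mul hp.ne' hq.ne', add_sub_cancel_left]
  refine (log_ineq t).trans ?_
  have hs : √‖t‖ ≤ √‖h‖ * (√(1 - ‖z‖))⁻¹ := by
    rw [← div_eq_mul_inv, ← Real.sqrt_div' _ hd.le]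
    exact Real.sqrt_le_sqrt ht1
  have hs2 : (√‖1 + t‖)⁻¹ ≤ 2 := by
    rw [inv_le_comm₀ (by positivity) (by norm_num)]
    apply Real.le_sqrt_of_sq_le
    norm_num; linarith
  calc 8 * √‖t‖ ^ 3 * (1 + (√‖1 + t‖)⁻¹) ≤ 8 * (√‖h‖ * (√(1 - ‖z‖))⁻¹) ^ 3 * (1 + 2) := by gcongr
    _ = _ := by ring

lemma Ph_diff {z w h : ℂ} (hz : ‖z‖ < 1) (hw : ‖w‖ < 1) (hh : ‖h‖ ≤ (1 - ‖z‖) / 2)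
    (hzw : z ≠ w) (hzw' : z + h ≠ w) :
    |Ph (z + h) w - Ph z w - (h * KK z w).re|
      ≤ √‖h‖ ^ 3 * (24 * ((√(1 - ‖z‖))⁻¹) ^ 3 + 16 * (PP (z - w) + PP (z + h - w))) := by
  have hzh : ‖z + h‖ < 1 := by
    have := norm_add_le z h; linarith
  rw [Ph_eq hz hw hzw, Ph_eq hzh hw hzw', KK_eq hz hw hzw, mul_sub, Complex.sub_re]
  have h1 := sm_diff hz hw hh
  have h2 := log_diff (z - w) h (sub_ne_zero.2 hzw) (by rw [sub_add_eq_add_sub]; exact sub_ne_zero.2 hzw')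
  rw [sub_add_eq_add_sub] at h2
  rw [mul_one_div]
  rw [abs_le] at *
  constructor <;> linarith [h1.1, h1.2, h2.1, h2.2]

lemma inv_le_PP (u : ℂ) : (√‖u‖)⁻¹ ≤ 1 + PP u := by
  unfold PP
  have : 0 ≤ (√‖u‖)⁻¹ := by positivity
  generalize (√‖u‖)⁻¹ = a at *
  nlinarith [mul_nonneg this (sq_nonneg (a - 1)), sq_nonneg (a-1)]

lemma inv_le_PP' (u : ℂ) : ‖u‖⁻¹ ≤ 1 + PP u := by
  unfold PP
  have : 0 ≤ (√‖u‖)⁻¹ := by positivity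
  have e : ‖u‖⁻¹ = ((√‖u‖)⁻¹) ^ 2 := by rw [inv_pow, Real.sq_sqrt (norm_nonneg _)]
  rw [e]
  generalize (√‖u‖)⁻¹ = a at *
  nlinarith [mul_nonneg this (sq_nonneg (a - 1)), sq_nonneg (a-1)]

lemma Ph_bd {z w : ℂ} (hz : ‖z‖ < 1) (hw : ‖w‖ < 1) (hzw : z ≠ w) :
    |Ph z w| ≤ (6 + 2 * (√(1 - ‖z‖))⁻¹) + 2 * PP (z - w) := by
  rw [Ph_eq hz hw hzw]
  have hd : 0 < 1 - ‖z‖ := by linarith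
  have h1 := abs_log_le (norm_nonneg (1 - z * (starRingEnd ℂ) w))
  have h2 := abs_log_le (norm_nonneg (z - w))
  have h3 : (√‖1 - z * (starRingEnd ℂ) w‖)⁻¹ ≤ (√(1 - ‖z‖))⁻¹ := by
    have := one_sub_bd (z := z) hw
    gcongr
  have h4 := inv_le_PP (z - w)
  have h5 : ‖1 - z * (starRingEnd ℂ) w‖ ≤ 2 := by
    refine (norm_sub_le _ _).trans ?_
    rw [norm_mul, RCLike.norm_conj, norm_one]
    nlinarith [norm_nonneg z, norm_nonneg w]
  have h6 : ‖z - w‖ ≤ 2 := (norm_sub_le _ _).trans (by linarith)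
  have := abs_sub (Real.log ‖1 - z * (starRingEnd ℂ) w‖) (Real.log ‖z - w‖)
  linarith

lemma KK_bd {z w : ℂ} (hz : ‖z‖ < 1) (hw : ‖w‖ < 1) (hzw : z ≠ w) :
    ‖KK z w‖ ≤ ((1 - ‖z‖)⁻¹ + 1) + PP (z - w) := by
  rw [KK_eq hz hw hzw]
  have hd : 0 < 1 - ‖z‖ := by linarith
  refine (norm_sub_le _ _).trans ?_
  have h1 : ‖-(starRingEnd ℂ) w / (1 - z * (starRingEnd ℂ) w)‖ ≤ (1 - ‖z‖)⁻¹ := by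
    rw [norm_div, norm_neg, RCLike.norm_conj, ← one_div]
    have := one_sub_bd (z := z) hw
    gcongr
  have h2 := inv_le_PP' (z - w)
  rw [one_div, norm_inv]
  linarith

lemma ae_ne (z : ℂ) : ∀ᵐ w ∂(volume.restrict (ball (0:ℂ) 1)), z ≠ w := by
  apply ae_restrict_of_ae
  filter_upwards [(measure_eq_zero_iff_ae_notMem.1 (measure_singleton z) : ∀ᵐ w ∂(volume : Measure ℂ), w ∉ ({z} : Set ℂ))] with w hw h
  exact hw h.symm

lemma ae_D : ∀ᵐ w ∂(volume.restrict (ball (0:ℂ) 1)), ‖w‖ < 1 := by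
  filter_upwards [ae_restrict_mem measurableSet_ball] with w hw
  simpa using hw

lemma conj_meas : Measurable (starRingEnd ℂ) := Complex.continuous_conj.measurable

lemma Ph_meas (z : ℂ) : Measurable (Ph z) := by
  have := conj_meas
  unfold Ph; fun_prop

lemma KK_meas (z : ℂ) : Measurable (KK z) := by
  have := conj_meas
  unfold KK; fun_prop

lemma maj_int (z : ℂ) (a b : ℝ) : IntegrableOn (fun w => a + b * PP (z - w)) (ball 0 1) := by
  apply Integrable.add
  · exact integrableOn_const (by simp)
  · exact (PP_int_tr z).const_mul b

lemma Ph_int {z : ℂ} (hz : ‖z‖ < 1) : IntegrableOn (Ph z) (ball 0 1) := by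
  refine (maj_int z (6 + 2 * (√(1 - ‖z‖))⁻¹) 2).mono' (Ph_meas z).aestronglyMeasurable ?_
  filter_upwards [ae_ne z, ae_D] with w h1 h2
  exact Ph_bd hz h2 h1

lemma KK_int {z : ℂ} (hz : ‖z‖ < 1) : IntegrableOn (KK z) (ball 0 1) := by
  refine (maj_int z ((1 - ‖z‖)⁻¹ + 1) 1).mono' (KK_meas z).aestronglyMeasurable ?_
  filter_upwards [ae_ne z, ae_D] with w h1 h2
  rw [one_mul]
  exact KK_bd hz h2 h1

lemma supD_le {g : ℂ → ℂ} (hg : ContinuousOn g (closedBall (0:ℂ) 1)) {w : ℂ} (hw : ‖w‖ < 1) :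
    ‖g w‖ ≤ supD g := by
  apply le_csSup
  · have := (isCompact_closedBall (0:ℂ) 1).bddAbove_image hg.norm
    exact this.mono (image_mono ball_subset_closedBall)
  · exact ⟨w, by simpa using hw, rfl⟩

lemma mul_g_int {g : ℂ → ℂ} (hg : ContinuousOn g (closedBall (0:ℂ) 1)) {f : ℂ → ℂ}
    (hf : IntegrableOn f (ball 0 1)) : IntegrableOn (fun w => f w * g w) (ball 0 1) := by
  refine Integrable.mul_bdd (c := supD g) hf
    ((hg.mono ball_subset_closedBall).aestronglyMeasurable measurableSet_ball) ?_
  filter_upwards [ae_D] with w h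
  exact supD_le hg h

def AA (g : ℂ → ℂ) (z : ℂ) : ℂ := ∫ w in ball (0:ℂ) 1, KK z w * g w
def BB (g : ℂ → ℂ) (z : ℂ) : ℂ := ∫ w in ball (0:ℂ) 1, (starRingEnd ℂ) (KK z w) * g w
def UU (g : ℂ → ℂ) (z : ℂ) : ℂ := ∫ w in ball (0:ℂ) 1, (Ph z w : ℂ) * g w

def LL (a b : ℂ) : ℂ →L[ℝ] ℂ :=
  (ContinuousLinearMap.mul ℝ ℂ a) + (ContinuousLinearMap.mul ℝ ℂ b).comp (Complex.conjCLE : ℂ →L[ℝ] ℂ)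

lemma LL_apply (a b h : ℂ) : LL a b h = a * h + b * (starRingEnd ℂ) h := by
  simp [LL]

lemma UU_bd {g : ℂ → ℂ} (hg : ContinuousOn g (closedBall (0:ℂ) 1)) {z : ℂ} (hz : ‖z‖ < 1) :
    ∃ C, ∀ h : ℂ, ‖h‖ ≤ (1 - ‖z‖) / 2 →
      ‖UU g (z + h) - UU g z - LL (AA g z / 2) (BB g z / 2) h‖ ≤ C * √‖h‖ ^ 3 := by
  obtain ⟨c, hc⟩ : ∃ c, c = 24 * ((√(1 - ‖z‖))⁻¹) ^ 3 := ⟨_, rfl⟩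
  set M := ∫ u in ball (0:ℂ) 2, PP u
  refine ⟨(c * volume.real (ball (0:ℂ) 1) + 16 * (M + M)) * supD g, fun h hh => ?_⟩
  have hzh : ‖z + h‖ < 1 := by
    have := norm_add_le z h; linarith
  have i1 : IntegrableOn (fun w => (Ph (z + h) w : ℂ) * g w) (ball 0 1) :=
    mul_g_int hg (Ph_int hzh).ofReal
  have i2 : IntegrableOn (fun w => (Ph z w : ℂ) * g w) (ball 0 1) :=
    mul_g_int hg (Ph_int hz).ofReal
  have hK := KK_int hz
  have hKc : IntegrableOn (fun w => (starRingEnd ℂ) (KK z w)) (ball 0 1) :=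
    (Complex.conjCLE : ℂ →L[ℝ] ℂ).integrable_comp hK
  have i3 := mul_g_int hg hK
  have i4 := mul_g_int hg hKc
  have e : UU g (z + h) - UU g z - LL (AA g z / 2) (BB g z / 2) h
      = ∫ w in ball (0:ℂ) 1, ((Ph (z + h) w - Ph z w - (h * KK z w).re : ℝ) : ℂ) * g w := by
    rw [LL_apply]
    unfold UU AA BB
    have e1 : (∫ w in ball (0:ℂ) 1, KK z w * g w) / 2 * h + (∫ w in ball (0:ℂ) 1, (starRingEnd ℂ) (KK z w) * g w) / 2 * (starRingEnd ℂ) h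
      = ∫ w in ball (0:ℂ) 1, ((h / 2) * (KK z w * g w) + ((starRingEnd ℂ) h / 2) * ((starRingEnd ℂ) (KK z w) * g w)) := by
      rw [integral_add (i3.const_mul _) (i4.const_mul _), integral_const_mul, integral_const_mul]
      ring
    have i5 : IntegrableOn (fun w => (Ph (z + h) w : ℂ) * g w - (Ph z w : ℂ) * g w) (ball 0 1) := i1.sub i2
    have i6 : IntegrableOn (fun w => (h / 2) * (KK z w * g w) + ((starRingEnd ℂ) h / 2) * ((starRingEnd ℂ) (KK z w) * g w)) (ball 0 1) :=
      (i3.const_mul _).add (i4.const_mul _)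
    rw [e1, ← integral_sub i1 i2, ← integral_sub i5 i6]
    congr 1; ext w
    push_cast
    rw [Complex.re_eq_add_conj, map_mul]
    ring
  rw [e]
  have p0 := PP_int_tr z
  have p1 := PP_int_tr (z + h)
  have hS : 0 ≤ supD g := (norm_nonneg _).trans (supD_le hg (w := 0) (by simp))
  have ic : IntegrableOn (fun _ : ℂ => c) (ball (0:ℂ) 1) :=
    integrableOn_const (by simp)
  have im := ic.add ((p0.add p1).const_mul 16)
  have im2 := (im.const_mul (√‖h‖ ^ 3)).mul_const (supD g)
  refine (norm_integral_le_of_norm_le im2 ?_).trans ?_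
  · filter_upwards [ae_ne z, ae_ne (z + h), ae_D] with w h1 h2 h3
    rw [norm_mul, Complex.norm_real, hc]
    exact mul_le_mul (Ph_diff hz h3 hh h1 h2) (supD_le hg h3) (norm_nonneg _)
      ((abs_nonneg _).trans (Ph_diff hz h3 hh h1 h2))
  · rw [integral_mul_const, integral_const_mul, integral_add' ic ((p0.add p1).const_mul 16),
      integral_const_mul, integral_add' p0 p1, setIntegral_const, smul_eq_mul]
    have b0 := PP_bd z hz
    have b1 := PP_bd (z + h) hzh
    calc √‖h‖ ^ 3 * (volume.real (ball (0:ℂ) 1) * c + 16 * ((∫ w in ball 0 1, PP (z - w)) + ∫ w in ball 0 1, PP (z + h - w))) * supD g 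
        ≤ √‖h‖ ^ 3 * (volume.real (ball (0:ℂ) 1) * c + 16 * (M + M)) * supD g := by gcongr
      _ = _ := by ring

lemma UU_deriv {g : ℂ → ℂ} (hg : ContinuousOn g (closedBall (0:ℂ) 1)) {z : ℂ} (hz : ‖z‖ < 1) :
    HasFDerivAt (UU g) (LL (AA g z / 2) (BB g z / 2)) z := by
  obtain ⟨C, hC⟩ := UU_bd hg hz
  rw [hasFDerivAt_iff_isLittleO_nhds_zero]
  have h1 : (fun h : ℂ => UU g (z + h) - UU g z - LL (AA g z / 2) (BB g z / 2) h) =O[nhds 0]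
      (fun h : ℂ => √‖h‖ ^ 3) := by
    apply Asymptotics.IsBigO.of_bound C
    filter_upwards [closedBall_mem_nhds (0:ℂ) (show 0 < (1 - ‖z‖) / 2 by linarith)] with h hh
    rw [Real.norm_of_nonneg (by positivity)]
    exact hC h (by simpa using hh)
  refine h1.trans_isLittleO ?_
  have h2 : (fun h : ℂ => √‖h‖) =o[nhds 0] (fun _ : ℂ => (1:ℝ)) := by
    rw [Asymptotics.isLittleO_one_iff]
    have : Continuous (fun h : ℂ => √‖h‖) := by fun_prop
    simpa using this.tendsto 0
  have h3 := h2.mul_isBigO (Asymptotics.isBigO_refl (fun h : ℂ => ‖h‖) (nhds 0))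
  rw [← Asymptotics.isLittleO_norm_right]
  refine h3.congr (fun h => ?_) (fun h => by simp)
  rw [pow_succ', Real.sq_sqrt (norm_nonneg _)]

lemma green_wdz {g : ℂ → ℂ} (hg : ContinuousOn g (closedBall (0:ℂ) 1)) {z : ℂ} (hz : ‖z‖ < 1) :
    wdz (greenPotential g) z = (1 / (4 * Real.pi) : ℝ) • AA g z ∧
    wdzbar (greenPotential g) z = (1 / (4 * Real.pi) : ℝ) • BB g z := by
  have h := ((UU_deriv hg hz).const_smul (1 / (2 * Real.pi) : ℝ)).fderiv
  have e : greenPotential g = (1 / (2 * Real.pi) : ℝ) • UU g := rfl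
  have hpi : (Real.pi : ℂ) ≠ 0 := by exact_mod_cast Real.pi_ne_zero
  unfold wdz wdzbar
  rw [e, h]
  simp only [smul_apply, LL_apply, map_one, Complex.conj_I, Complex.real_smul]
  push_cast
  constructor
  · field_simp
    linear_combination 4 * (-(AA g z) + BB g z) * Complex.I_sq
  · field_simp
    linear_combination 4 * ((AA g z) - BB g z) * Complex.I_sq

lemma one_dim {r : ℝ} (h0 : 0 < r) (h1 : r < 1) :
    ∫ ρ in (0:ℝ)..1, (1 - ρ ^ 2) * (1 + (r * ρ) ^ 2) / (1 - (r * ρ) ^ 2) ^ 3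
      = (1 / (4 * r ^ 2)) * ((1 + r ^ 2) / (1 - r ^ 2) - (1 - r ^ 2) / (2 * r) * Real.log ((1 + r) / (1 - r))) := by
  have hne : ∀ x ∈ uIcc (0:ℝ) 1, 0 < 1 - r * x ∧ 0 < 1 + r * x ∧ 0 < 1 - (r * x) ^ 2 := by
    intro x hx
    rw [uIcc_of_le zero_le_one] at hx
    have a : 0 ≤ r * x := mul_nonneg h0.le hx.1
    have b : r * x ≤ r := mul_le_of_le_one_right h0.le hx.2
    refine ⟨by linarith, by linarith, by nlinarith⟩
  have key := intervalIntegral.integral_eq_sub_of_hasDerivAt (a := 0) (b := 1)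
    (f := fun x : ℝ => ((1 + 3 * r ^ 2) / (4 * r ^ 2) * x - (3 + r ^ 2) / 4 * x ^ 3) / (1 - (r * x) ^ 2) ^ 2
      - (1 - r ^ 2) / (8 * r ^ 3) * (Real.log (1 + r * x) - Real.log (1 - r * x)))
    (f' := fun ρ => (1 - ρ ^ 2) * (1 + (r * ρ) ^ 2) / (1 - (r * ρ) ^ 2) ^ 3) ?_ ?_
  · rw [key]
    have e : 1 - r ^ 2 ≠ 0 := by nlinarith
    rw [Real.log_div (by linarith) (by linarith)]
    simp only [mul_one, mul_zero, add_zero, sub_zero, Real.log_one, one_pow]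
    field_simp
    ring
  · intro x hx
    obtain ⟨a, b, c⟩ := hne x hx
    have d1 : HasDerivAt (fun x : ℝ => r * x) r x := by simpa using (hasDerivAt_id x).const_mul r
    have d2 := ((d1.const_add 1).log b.ne').sub ((d1.const_sub 1).log a.ne')
    have d3 := ((d1.pow 2).const_sub 1).pow 2
    have d4 := ((hasDerivAt_id x).const_mul ((1 + 3 * r ^ 2) / (4 * r ^ 2))).sub (((hasDerivAt_id x).pow 3).const_mul ((3 + r ^ 2) / 4))
    have d5 := (d4.div d3 (pow_ne_zero 2 c.ne')).sub (d2.const_mul ((1 - r ^ 2) / (8 * r ^ 3)))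
    refine d5.congr_deriv ?_
    have c' : 1 - (r * x) ^ 2 = (1 - r * x) * (1 + r * x) := by ring
    simp only [Pi.pow_apply, id, Pi.sub_apply, c']
    have a' := a.ne'
    have b' := b.ne'
    field_simp
    ring
  · apply ContinuousOn.intervalIntegrable
    apply ContinuousOn.div (by fun_prop) (by fun_prop)
    intro x hx
    exact pow_ne_zero 3 (hne x hx).2.2.ne'

lemma circ {c : ℂ} (hc : ‖c‖ < 1) :
    ∫ θ in (-Real.pi)..Real.pi, (‖1 - c * Complex.exp (θ * Complex.I)‖ ^ 4)⁻¹
      = 2 * Real.pi * ((1 + ‖c‖ ^ 2) / (1 - ‖c‖ ^ 2) ^ 3) := by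
  have hper : Function.Periodic (fun θ : ℝ => (‖1 - c * Complex.exp (θ * Complex.I)‖ ^ 4)⁻¹) (2 * Real.pi) := by
    intro θ
    simp only
    push_cast
    rw [add_mul, Complex.exp_add, Complex.exp_two_pi_mul_I, mul_one]
  have e0 := hper.intervalIntegral_add_eq (-Real.pi) 0
  rw [show -Real.pi + 2 * Real.pi = Real.pi by ring, zero_add] at e0
  rw [e0]
  have hU : IsOpen {x : ℂ | 1 - c * x ≠ 0} := isOpen_ne_fun (by fun_prop) (by fun_prop)
  have hne : ∀ x : ℂ, ‖x‖ ≤ 1 → 1 - c * x ≠ 0 := by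
    intro x hx h
    have : ‖c * x‖ = 1 := by rw [← sub_eq_zero.1 h]; simp
    rw [norm_mul] at this
    nlinarith [norm_nonneg x, norm_nonneg c]
  have hcc : 1 - c * (starRingEnd ℂ) c ≠ 0 := hne _ (by rw [RCLike.norm_conj]; exact hc.le)
  have key := Complex.two_pi_I_inv_smul_circleIntegral_sub_sq_inv_smul_of_differentiable
    (U := {x : ℂ | 1 - c * x ≠ 0}) (c := 0) (R := 1) (w₀ := (starRingEnd ℂ) c)
    (f := fun x => x / (1 - c * x) ^ 2) hU
    (fun x hx => hne x (by simpa using hx))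
    (by
      intro x hx
      apply DifferentiableAt.differentiableWithinAt
      apply DifferentiableAt.div (by fun_prop) (by fun_prop)
      exact pow_ne_zero 2 hx)
    (by simpa using hc)
  have hd : deriv (fun x => x / (1 - c * x) ^ 2) ((starRingEnd ℂ) c)
      = (((1 + ‖c‖ ^ 2) / (1 - ‖c‖ ^ 2) ^ 3 : ℝ) : ℂ) := by
    have d1 := ((((hasDerivAt_id ((starRingEnd ℂ) c)).const_mul c).const_sub 1).pow 2)
    have d2 := (hasDerivAt_id ((starRingEnd ℂ) c)).div d1 (pow_ne_zero 2 hcc)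
    have := d2.deriv
    refine this.trans ?_
    push_cast
    rw [← Complex.mul_conj']
    simp only [Pi.pow_apply, id]
    field_simp
    ring
  rw [hd] at key
  have e1 : (∮ z in C(0, 1), ((z - (starRingEnd ℂ) c) ^ 2)⁻¹ • (z / (1 - c * z) ^ 2))
      = Complex.I * ((∫ θ in (0:ℝ)..(2 * Real.pi), (‖1 - c * Complex.exp (θ * Complex.I)‖ ^ 4)⁻¹ : ℝ) : ℂ) := by
    rw [circleIntegral, ← intervalIntegral.integral_ofReal, ← intervalIntegral.integral_const_mul]
    congr 1; ext θ
    rw [deriv_circleMap, circleMap_zero]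
    set x := Complex.exp (θ * Complex.I) with hx
    have hx1 : ‖x‖ = 1 := Complex.norm_exp_ofReal_mul_I θ
    have hx0 : x ≠ 0 := Complex.exp_ne_zero _
    have hn := hne x hx1.le
    have hxc : x * (starRingEnd ℂ) x = 1 := by rw [Complex.mul_conj', hx1]; simp
    have hq : (((‖1 - c * x‖ ^ 4)⁻¹ : ℝ) : ℂ) = (((1 - c * x) * (1 - (starRingEnd ℂ) c * (starRingEnd ℂ) x)) ^ 2)⁻¹ := by
      have : (1 - (starRingEnd ℂ) c * (starRingEnd ℂ) x) = (starRingEnd ℂ) (1 - c * x) := by simp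
      rw [this, Complex.mul_conj']
      push_cast; ring
    have hs : x - (starRingEnd ℂ) c = x * (1 - (starRingEnd ℂ) c * (starRingEnd ℂ) x) := by
      linear_combination (starRingEnd ℂ) c * hxc
    have hn2 : (1 - (starRingEnd ℂ) c * (starRingEnd ℂ) x) ≠ 0 := by
      have : (1 - (starRingEnd ℂ) c * (starRingEnd ℂ) x) = (starRingEnd ℂ) (1 - c * x) := by simp
      rw [this]; exact (map_ne_zero _).2 hn
    simp only [Complex.ofReal_one, one_mul, smul_eq_mul]
    rw [hs]
    erw [hq]
    field_simp
  rw [e1] at key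
  have hpi : (Real.pi : ℂ) ≠ 0 := by exact_mod_cast Real.pi_ne_zero
  have hI := Complex.I_ne_zero
  rw [smul_eq_mul, inv_mul_eq_iff_eq_mul₀ (by simp [hpi])] at key
  have key2 := mul_left_cancel₀ hI (key.trans (show _ = Complex.I * ((2 * Real.pi * ((1 + ‖c‖ ^ 2) / (1 - ‖c‖ ^ 2) ^ 3) : ℝ) : ℂ) by push_cast; ring))
  exact_mod_cast key2

def mob (z x : ℂ) : ℂ := (z - x) / (1 - (starRingEnd ℂ) z * x)

lemma mob_ne {z x : ℂ} (hz : ‖z‖ < 1) (hx : ‖x‖ < 1) : 1 - (starRingEnd ℂ) z * x ≠ 0 := by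
  have := one_sub_ne hx hz
  rwa [mul_comm] at this

lemma mob_one_sub {z x : ℂ} (hz : ‖z‖ < 1) (hx : ‖x‖ < 1) :
    1 - ‖mob z x‖ ^ 2 = (1 - ‖z‖ ^ 2) * (1 - ‖x‖ ^ 2) / ‖1 - (starRingEnd ℂ) z * x‖ ^ 2 := by
  have h := mob_ne hz hx
  have hn : ‖1 - (starRingEnd ℂ) z * x‖ ≠ 0 := norm_ne_zero_iff.2 h
  unfold mob
  rw [norm_div, div_pow, eq_div_iff (pow_ne_zero 2 hn), sub_mul, div_mul_cancel₀ _ (pow_ne_zero 2 hn)]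
  have : ((1 * ‖1 - (starRingEnd ℂ) z * x‖ ^ 2 - ‖z - x‖ ^ 2 : ℝ) : ℂ) = (((1 - ‖z‖ ^ 2) * (1 - ‖x‖ ^ 2) : ℝ) : ℂ) := by
    push_cast
    simp only [← Complex.mul_conj', map_sub, map_mul, map_one, Complex.conj_conj]
    ring
  exact_mod_cast this

lemma mob_lt {z x : ℂ} (hz : ‖z‖ < 1) (hx : ‖x‖ < 1) : ‖mob z x‖ < 1 := by
  have h := mob_one_sub hz hx
  have hn : 0 < ‖1 - (starRingEnd ℂ) z * x‖ := norm_pos_iff.2 (mob_ne hz hx)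
  have h1 : 0 < 1 - ‖z‖ ^ 2 := by nlinarith [norm_nonneg z]
  have h2 : 0 < 1 - ‖x‖ ^ 2 := by nlinarith [norm_nonneg x]
  have : 0 < 1 - ‖mob z x‖ ^ 2 := by rw [h]; positivity
  nlinarith [norm_nonneg (mob z x)]

lemma mob_den {z x : ℂ} (hz : ‖z‖ < 1) (hx : ‖x‖ < 1) :
    1 - (starRingEnd ℂ) z * mob z x = (1 - ‖z‖ ^ 2 : ℝ) / (1 - (starRingEnd ℂ) z * x) := by
  have h := mob_ne hz hx
  have h' : 1 - x * (starRingEnd ℂ) z ≠ 0 := by rwa [mul_comm]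
  unfold mob
  push_cast
  rw [← Complex.mul_conj']
  field_simp
  ring

lemma mob_sub {z x : ℂ} (hz : ‖z‖ < 1) (hx : ‖x‖ < 1) :
    z - mob z x = x * (1 - ‖z‖ ^ 2 : ℝ) / (1 - (starRingEnd ℂ) z * x) := by
  have h := mob_ne hz hx
  have h' : 1 - x * (starRingEnd ℂ) z ≠ 0 := by rwa [mul_comm]
  unfold mob
  push_cast
  rw [← Complex.mul_conj']
  field_simp
  ring

lemma mob_mob {z x : ℂ} (hz : ‖z‖ < 1) (hx : ‖x‖ < 1) : mob z (mob z x) = x := by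
  have h := mob_ne hz hx
  have h1 : ((1 - ‖z‖ ^ 2 : ℝ) : ℂ) ≠ 0 := by
    have : 0 < 1 - ‖z‖ ^ 2 := by nlinarith [norm_nonneg z]
    exact_mod_cast this.ne'
  rw [mob, mob_den hz hx, mob_sub hz hx, div_div_div_cancel_right₀ h, mul_div_cancel_right₀ _ h1]

lemma mob_deriv {z x : ℂ} (hz : ‖z‖ < 1) (hx : ‖x‖ < 1) :
    HasDerivAt (mob z) (-(1 - ‖z‖ ^ 2 : ℝ) / (1 - (starRingEnd ℂ) z * x) ^ 2) x := by
  have h := mob_ne hz hx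
  have d := ((hasDerivAt_id x).const_sub z).div (((hasDerivAt_id x).const_mul ((starRingEnd ℂ) z)).const_sub 1) h
  refine d.congr_deriv ?_
  push_cast
  rw [← Complex.mul_conj']
  simp only [id]
  congr 1
  ring

lemma det_cplx (a : ℂ) : ((ContinuousLinearMap.toSpanSingleton ℂ a).restrictScalars ℝ : ℂ →L[ℝ] ℂ).det = ‖a‖ ^ 2 := by
  rw [ContinuousLinearMap.det]
  have : (((ContinuousLinearMap.toSpanSingleton ℂ a).restrictScalars ℝ : ℂ →L[ℝ] ℂ) : ℂ →ₗ[ℝ] ℂ)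
    = Algebra.lmul ℝ ℂ a := by
    ext <;> simp [mul_comm]
  rw [this, ← Algebra.norm_apply, Algebra.norm_complex_apply, Complex.normSq_eq_norm_sq]

lemma KK_mob {z x : ℂ} (hz : ‖z‖ < 1) (hx : ‖x‖ < 1) :
    |((ContinuousLinearMap.toSpanSingleton ℂ (-(1 - ‖z‖ ^ 2 : ℝ) / (1 - (starRingEnd ℂ) z * x) ^ 2 : ℂ)).restrictScalars ℝ : ℂ →L[ℝ] ℂ).det| • ‖KK z (mob z x)‖
      = (1 - ‖z‖ ^ 2) * (1 - ‖x‖ ^ 2) * (‖x‖⁻¹ * (‖1 - (starRingEnd ℂ) z * x‖ ^ 4)⁻¹) := by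
  rw [det_cplx, abs_of_nonneg (by positivity), smul_eq_mul]
  have h := mob_ne hz hx
  have hn : 0 < ‖1 - (starRingEnd ℂ) z * x‖ := norm_pos_iff.2 h
  have h1 : 0 < 1 - ‖z‖ ^ 2 := by nlinarith [norm_nonneg z]
  have h2 : 0 < 1 - ‖x‖ ^ 2 := by nlinarith [norm_nonneg x]
  have hm : 0 ≤ 1 - ‖mob z x‖ ^ 2 := by
    have := mob_lt hz hx
    nlinarith [norm_nonneg (mob z x)]
  have e : ‖z * (starRingEnd ℂ) (mob z x) - 1‖ = ‖1 - (starRingEnd ℂ) z * mob z x‖ := by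
    rw [← RCLike.norm_conj (z * (starRingEnd ℂ) (mob z x) - 1), ← norm_neg]
    congr 1; simp
  have e0 : ‖KK z (mob z x)‖ = ‖((1 - ‖mob z x‖ ^ 2 : ℝ) : ℂ)‖ / (‖z - mob z x‖ * ‖z * (starRingEnd ℂ) (mob z x) - 1‖) := by
    unfold KK; rw [norm_div, norm_mul]
  rw [e0, e, mob_den hz hx, mob_sub hz hx, Complex.norm_real, Real.norm_of_nonneg hm,
    mob_one_sub hz hx]
  simp only [norm_div, norm_mul, norm_neg, norm_pow, Complex.norm_real, Real.norm_of_nonneg h1.le]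
  rcases eq_or_ne x 0 with rfl | hx0
  · simp
  · have : 0 < ‖x‖ := norm_pos_iff.2 hx0
    field_simp

lemma KK_cov {z : ℂ} (hz : ‖z‖ < 1) : ∫ w in ball (0:ℂ) 1, ‖KK z w‖ =
    ∫ x in ball (0:ℂ) 1, (1 - ‖z‖ ^ 2) * (1 - ‖x‖ ^ 2) * (‖x‖⁻¹ * (‖1 - (starRingEnd ℂ) z * x‖ ^ 4)⁻¹) := by
  have himg : mob z '' ball (0:ℂ) 1 = ball 0 1 := by
    ext y
    constructor
    · rintro ⟨x, hx, rfl⟩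
      simp at hx ⊢
      exact mob_lt hz hx
    · intro hy
      simp at hy
      exact ⟨mob z y, by simpa using mob_lt hz hy, mob_mob hz hy⟩
  have hinj : InjOn (mob z) (ball (0:ℂ) 1) := by
    intro x hx y hy hxy
    simp at hx hy
    rw [← mob_mob hz hx, hxy, mob_mob hz hy]
  have := integral_image_eq_integral_abs_det_fderiv_smul volume (s := ball (0:ℂ) 1) measurableSet_ball
    (f := mob z) (f' := fun x => ((ContinuousLinearMap.toSpanSingleton ℂ (-(1 - ‖z‖ ^ 2 : ℝ) / (1 - (starRingEnd ℂ) z * x) ^ 2 : ℂ)).restrictScalars ℝ : ℂ →L[ℝ] ℂ))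
    (fun x hx => ((mob_deriv hz (by simpa using hx)).hasFDerivAt.restrictScalars ℝ).hasFDerivWithinAt)
    hinj (fun w => ‖KK z w‖)
  rw [himg] at this
  rw [this]
  apply setIntegral_congr_fun measurableSet_ball
  intro x hx
  exact KK_mob hz (by simpa using hx)

lemma KK_polar {z : ℂ} (hz : ‖z‖ < 1) : ∫ w in ball (0:ℂ) 1, ‖KK z w‖ =
    ∫ ρ in (0:ℝ)..1, (1 - ‖z‖ ^ 2) * (2 * Real.pi) * ((1 - ρ ^ 2) * (1 + (‖z‖ * ρ) ^ 2) / (1 - (‖z‖ * ρ) ^ 2) ^ 3) := by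
  rw [KK_cov hz, ← integral_indicator measurableSet_ball, ← Complex.integral_comp_polarCoord_symm]
  have e1 : ∫ p in polarCoord.target, p.1 • (ball (0:ℂ) 1).indicator (fun x => (1 - ‖z‖ ^ 2) * (1 - ‖x‖ ^ 2) * (‖x‖⁻¹ * (‖1 - (starRingEnd ℂ) z * x‖ ^ 4)⁻¹)) (Complex.polarCoord.symm p)
     = ∫ p in (Ioo (0:ℝ) 1) ×ˢ (Ioo (-Real.pi) Real.pi), (1 - ‖z‖ ^ 2) * (1 - p.1 ^ 2) * (‖1 - ((starRingEnd ℂ) z * p.1) * Complex.exp (p.2 * Complex.I)‖ ^ 4)⁻¹ := by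
    have hms : MeasurableSet ((Ioo (0:ℝ) 1) ×ˢ (Ioo (-Real.pi) Real.pi)) := measurableSet_Ioo.prod measurableSet_Ioo
    have hmt : MeasurableSet polarCoord.target := polarCoord.open_target.measurableSet
    rw [← integral_indicator hms, ← integral_indicator hmt]
    congr 1; ext ⟨ρ, θ⟩
    simp only [indicator, mem_prod, mem_Ioo, polarCoord_target, mem_Ioi]
    have hsym : Complex.polarCoord.symm (ρ, θ) = ρ * Complex.exp (θ * Complex.I) := by
      rw [Complex.polarCoord_symm_apply, Complex.exp_mul_I]
      simp
    rw [hsym]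
    have hn : ‖(ρ:ℂ) * Complex.exp (θ * Complex.I)‖ = |ρ| := by
      rw [norm_mul, Complex.norm_exp_ofReal_mul_I, mul_one, Complex.norm_real, Real.norm_eq_abs]
    simp only [mem_ball_zero_iff, hn]
    by_cases h1 : 0 < ρ
    · rw [abs_of_pos h1]
      by_cases h2 : ρ < 1
      · simp only [h1, h2, true_and, if_true, mul_assoc]
        split_ifs
        · rw [smul_eq_mul]; field_simp
        · rfl
      · simp [h2]
    · simp [h1]
  rw [e1]
  have hnn : ∀ ρ : ℝ, 0 ≤ ρ → ρ ≤ 1 → ‖(starRingEnd ℂ) z * ρ‖ < 1 := by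
    intro ρ h0 h1
    rw [norm_mul, RCLike.norm_conj, Complex.norm_real, Real.norm_of_nonneg h0]
    exact (mul_le_of_le_one_right (norm_nonneg _) h1).trans_lt hz
  have hint : IntegrableOn (fun p : ℝ × ℝ => (1 - ‖z‖ ^ 2) * (1 - p.1 ^ 2) * (‖1 - ((starRingEnd ℂ) z * p.1) * Complex.exp (p.2 * Complex.I)‖ ^ 4)⁻¹) ((Ioo (0:ℝ) 1) ×ˢ (Ioo (-Real.pi) Real.pi)) (volume.prod volume) := by
    have hc : IsCompact ((Icc (0:ℝ) 1) ×ˢ (Icc (-Real.pi) Real.pi)) := isCompact_Icc.prod isCompact_Icc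
    refine IntegrableOn.mono_set (ContinuousOn.integrableOn_compact hc ?_)
      (prod_mono Ioo_subset_Icc_self Ioo_subset_Icc_self)
    apply ContinuousOn.mul (by fun_prop)
    apply ContinuousOn.inv₀ (by fun_prop)
    rintro ⟨ρ, θ⟩ ⟨h1, -⟩
    apply pow_ne_zero
    rw [norm_ne_zero_iff]
    intro h
    have h2 := hnn ρ h1.1 h1.2
    have h3 : ‖(starRingEnd ℂ) z * ρ * Complex.exp (θ * Complex.I)‖ = 1 := by
      rw [← sub_eq_zero.1 h]; simp
    rw [norm_mul, Complex.norm_exp_ofReal_mul_I, mul_one] at h3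
    linarith
  rw [Measure.volume_eq_prod, setIntegral_prod _ hint, intervalIntegral.integral_of_le zero_le_one,
    integral_Ioc_eq_integral_Ioo]
  apply setIntegral_congr_fun measurableSet_Ioo
  intro ρ hρ
  simp only
  rw [integral_const_mul, ← integral_Ioc_eq_integral_Ioo,
    ← intervalIntegral.integral_of_le (by linarith [Real.pi_pos]), circ (hnn ρ hρ.1.le hρ.2.le)]
  rw [norm_mul, RCLike.norm_conj, Complex.norm_real, Real.norm_of_nonneg hρ.1.le]
  ring

lemma KK_total {z : ℂ} (hz : ‖z‖ < 1) (h0 : z ≠ 0) (c : ℝ) :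
    (1 / (4 * Real.pi)) * (c * ∫ w in ball (0:ℂ) 1, ‖KK z w‖) = mu c ‖z‖ := by
  rw [KK_polar hz, intervalIntegral.integral_const_mul, one_dim (norm_pos_iff.2 h0) hz]
  unfold mu
  have := Real.pi_ne_zero
  have h1 : 0 < ‖z‖ := norm_pos_iff.2 h0
  generalize (1 + ‖z‖ ^ 2) / (1 - ‖z‖ ^ 2) - (1 - ‖z‖ ^ 2) / (2 * ‖z‖) * Real.log ((1 + ‖z‖) / (1 - ‖z‖)) = X
  field_simp
  ring

lemma fin_bd {g : ℂ → ℂ} (hg : ContinuousOn g (closedBall (0:ℂ) 1)) {z : ℂ} (hz : ‖z‖ < 1)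
    (h0 : z ≠ 0) (f : ℂ → ℂ) (hf : ∀ w, ‖f w‖ = ‖KK z w‖) :
    ‖(1 / (4 * Real.pi) : ℝ) • ∫ w in ball (0:ℂ) 1, f w * g w‖ ≤ mu (supD g) ‖z‖ := by
  rw [← KK_total hz h0, norm_smul, Real.norm_of_nonneg (by positivity), ← integral_const_mul]
  gcongr
  apply norm_integral_le_of_norm_le ((KK_int hz).norm.const_mul _)
  filter_upwards [ae_D] with w hw
  rw [norm_mul, hf, mul_comm]
  gcongr
  exact supD_le hg hw

/-- Bounds on the Wirtinger derivatives of the Green potential, and the integral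
formula for `∂G_g/∂z`. -/
theorem stmt7 (g : ℂ → ℂ) (hg : ContinuousOn g (closedBall (0:ℂ) 1)) :
    ∀ z ∈ ball (0:ℂ) 1, z ≠ 0 →
      ‖wdz (greenPotential g) z‖ ≤ mu (supD g) ‖z‖ ∧
      ‖wdzbar (greenPotential g) z‖ ≤ mu (supD g) ‖z‖ ∧
      wdz (greenPotential g) z =
        (1 / (4 * Real.pi) : ℝ) • ∫ w in ball (0:ℂ) 1,
          (((1 - ‖w‖ ^ 2 : ℝ) : ℂ) / ((z - w) * (z * (starRingEnd ℂ) w - 1))) * g w := by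
  intro z hz h0
  have hz' : ‖z‖ < 1 := by simpa using hz
  obtain ⟨e1, e2⟩ := green_wdz hg hz'
  refine ⟨?_, ?_, e1⟩
  · rw [e1]; exact fin_bd hg hz' h0 (KK z) (fun _ => rfl)
  · rw [e2]; exact fin_bd hg hz' h0 (fun w => (starRingEnd ℂ) (KK z w)) (fun _ => RCLike.norm_conj _)
end
end

section
/- For every z ∈ 𝔻 \ {0} with r = |z|, the improper integral ∫_𝔻 dA(w)/(|w|·|z−w|) equals ∫₀^{2π} log(1 − r cos t + √(1 + r² − 2r cos t)) dt − 2π log r + 2π log 2, and this quantity is at most 2π log(4(1+r)) − 2π log r. -/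
open Metric MeasureTheory Set Filter

noncomputable section

lemma aux_deriv (r c x : ℝ) (hr : 0 < r) (hc : c ^ 2 < 1) :
    0 < x - r * c + Real.sqrt (x ^ 2 + r ^ 2 - 2 * x * r * c) ∧
    0 < x ^ 2 + r ^ 2 - 2 * x * r * c ∧
    HasDerivAt (fun x => Real.log (x - r * c + Real.sqrt (x ^ 2 + r ^ 2 - 2 * x * r * c)))
      (1 / Real.sqrt (x ^ 2 + r ^ 2 - 2 * x * r * c)) x := by
  have h1 : (x - r * c) ^ 2 < x ^ 2 + r ^ 2 - 2 * x * r * c := by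
    nlinarith [mul_pos (pow_pos hr 2) (sub_pos.2 hc)]
  have h2 : 0 < x ^ 2 + r ^ 2 - 2 * x * r * c := lt_of_le_of_lt (sq_nonneg _) h1
  have h3 : |x - r * c| < Real.sqrt (x ^ 2 + r ^ 2 - 2 * x * r * c) := by
    rw [← Real.sqrt_sq_eq_abs]
    exact Real.sqrt_lt_sqrt (sq_nonneg _) h1
  have h4 : 0 < x - r * c + Real.sqrt (x ^ 2 + r ^ 2 - 2 * x * r * c) := by
    have := (abs_lt.1 h3).1
    linarith
  refine ⟨h4, h2, ?_⟩
  have hs : 0 < Real.sqrt (x ^ 2 + r ^ 2 - 2 * x * r * c) := Real.sqrt_pos.2 h2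
  have hd : HasDerivAt (fun x : ℝ => x ^ 2 + r ^ 2 - 2 * x * r * c) (2 * x - 2 * r * c) x := by
    have := ((hasDerivAt_pow 2 x).add_const (r ^ 2)).sub
      ((((hasDerivAt_id x).const_mul 2).mul_const r).mul_const c)
    refine this.congr_deriv ?_
    norm_num
  have := ((((hasDerivAt_id x).sub_const (r * c)).add (hd.sqrt h2.ne'))).log h4.ne'
  refine this.congr_deriv ?_
  simp only [id, Pi.add_apply]
  field_simp
  ring

lemma aux_inner_s9 (r c : ℝ) (hr : 0 < r) (hc : c ^ 2 < 1) :
    IntervalIntegrable (fun x => 1 / Real.sqrt (x ^ 2 + r ^ 2 - 2 * x * r * c)) volume 0 1 ∧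
    ∫ x in (0:ℝ)..1, 1 / Real.sqrt (x ^ 2 + r ^ 2 - 2 * x * r * c) =
      Real.log (1 - r * c + Real.sqrt (1 + r ^ 2 - 2 * r * c)) - (Real.log r + Real.log (1 - c)) := by
  have hi : IntervalIntegrable (fun x => 1 / Real.sqrt (x ^ 2 + r ^ 2 - 2 * x * r * c))
      volume 0 1 := by
    apply Continuous.intervalIntegrable
    refine Continuous.div (by fun_prop) (by fun_prop) fun x => ?_
    exact (Real.sqrt_pos.2 (aux_deriv r c x hr hc).2.1).ne'
  refine ⟨hi, ?_⟩
  have hc1 : 0 < 1 - c := by nlinarith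
  rw [← Real.log_mul hr.ne' hc1.ne', intervalIntegral.integral_eq_sub_of_hasDerivAt
    (fun x _ => (aux_deriv r c x hr hc).2.2) hi]
  congr 3
  · ring_nf
  · simp [Real.sqrt_sq hr.le]; ring

lemma aux_log_cos : IntervalIntegrable (fun t => Real.log (1 - Real.cos t)) volume 0 (2 * Real.pi) ∧
    ∫ t in (0:ℝ)..(2 * Real.pi), Real.log (1 - Real.cos t) = - (2 * Real.pi * Real.log 2) := by
  have key : ∀ t ∈ Ioo (0:ℝ) (2 * Real.pi), Real.log 2 + 2 * Real.log (Real.sin (t / 2)) =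
      Real.log (1 - Real.cos t) := by
    intro t ht
    have hs : 0 < Real.sin (t / 2) :=
      Real.sin_pos_of_pos_of_lt_pi (by linarith [ht.1]) (by linarith [ht.2])
    have : 1 - Real.cos t = 2 * Real.sin (t / 2) ^ 2 := by
      have := Real.cos_sq (t / 2)
      rw [mul_div_cancel₀ t two_ne_zero] at this
      have := Real.sin_sq_add_cos_sq (t / 2)
      linarith
    rw [this, Real.log_mul (by norm_num) (by positivity), Real.log_pow]
    norm_num
  have hpi := Real.pi_pos
  have hi : IntervalIntegrable (fun t => Real.log (Real.sin (t / 2))) volume 0 (2 * Real.pi) := by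
    have := (intervalIntegrable_log_sin (a := 0) (b := Real.pi)).comp_mul_right (c := 1/2) 
    simp at this
    rw [mul_comm 2 Real.pi]
    simpa only [div_eq_mul_inv] using this
  have hi2 := (intervalIntegrable_const (c := Real.log 2) (μ := volume) (a := 0) (b := 2 * Real.pi)).add (hi.const_mul 2)
  constructor
  · refine hi2.congr_ae ?_
    rw [uIoc_of_le (by positivity), ← restrict_Ioo_eq_restrict_Ioc]
    filter_upwards [ae_restrict_mem measurableSet_Ioo] with t ht using key t ht
  · have : ∫ t in (0:ℝ)..(2 * Real.pi), Real.log (1 - Real.cos t) =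
        ∫ t in (0:ℝ)..(2 * Real.pi), (Real.log 2 + 2 * Real.log (Real.sin (t / 2))) := by
      rw [intervalIntegral.integral_of_le (by positivity), intervalIntegral.integral_of_le (by positivity),
        integral_Ioc_eq_integral_Ioo, integral_Ioc_eq_integral_Ioo]
      exact setIntegral_congr_fun measurableSet_Ioo fun t ht => (key t ht).symm
    rw [this, intervalIntegral.integral_add intervalIntegrable_const (hi.const_mul 2),
      intervalIntegral.integral_const_mul,
      intervalIntegral.integral_comp_div (fun x => Real.log (Real.sin x)) (by norm_num : (2:ℝ) ≠ 0)]
    simp [integral_log_sin_zero_pi]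
    ring


def ffG (r t : ℝ) : ℝ := Real.log (1 - r * Real.cos t + Real.sqrt (1 + r ^ 2 - 2 * r * Real.cos t))

lemma ffG_pos (r t : ℝ) (hr : 0 < r) (hr1 : r < 1) :
    0 < 1 - r * Real.cos t + Real.sqrt (1 + r ^ 2 - 2 * r * Real.cos t) := by
  have := Real.sqrt_nonneg (1 + r ^ 2 - 2 * r * Real.cos t)
  nlinarith [Real.cos_le_one t]

lemma ffG_cont (r : ℝ) (hr : 0 < r) (hr1 : r < 1) : Continuous (ffG r) := by
  unfold ffG
  exact Continuous.log (by fun_prop) fun t => (ffG_pos r t hr hr1).ne'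

lemma aux_outer (r : ℝ) (hr : 0 < r) (hr1 : r < 1) :
    IntervalIntegrable (fun t => ffG r t - (Real.log r + Real.log (1 - Real.cos t))) volume
      (-Real.pi) Real.pi ∧
    ∫ t in (-Real.pi)..Real.pi, (ffG r t - (Real.log r + Real.log (1 - Real.cos t))) =
      (∫ t in (0:ℝ)..(2 * Real.pi), ffG r t) - 2 * Real.pi * Real.log r
        + 2 * Real.pi * Real.log 2 := by
  have hper : Function.Periodic
      (fun t => ffG r t - (Real.log r + Real.log (1 - Real.cos t))) (2 * Real.pi) := by
    intro t
    simp [ffG]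
  have hc := (ffG_cont r hr hr1).intervalIntegrable (μ := volume) 0 (2 * Real.pi)
  have h2 := (intervalIntegrable_const (c := Real.log r) (μ := volume) (a := 0)
    (b := 2 * Real.pi)).add aux_log_cos.1
  have h3 := hc.sub h2
  constructor
  · refine hper.intervalIntegrable (t := 0) (by positivity) ?_ _ _
    rw [zero_add]; exact h3
  · have := hper.intervalIntegral_add_eq (-Real.pi) 0
    rw [show -Real.pi + 2 * Real.pi = Real.pi by ring, zero_add] at this
    rw [this, intervalIntegral.integral_sub hc h2,
      intervalIntegral.integral_add intervalIntegrable_const aux_log_cos.1, aux_log_cos.2]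
    simp
    ring

lemma aux_cos_sq (t : ℝ) (ht : t ∈ Ioo (-Real.pi) Real.pi) (h0 : t ≠ 0) : Real.cos t ^ 2 < 1 := by
  have hs : Real.sin t ≠ 0 := by
    intro h
    exact h0 ((Real.sin_eq_zero_iff_of_lt_of_lt ht.1 ht.2).1 h)
  have := Real.sin_sq_add_cos_sq t
  have : 0 < Real.sin t ^ 2 := by positivity
  linarith

lemma aux_prod (r : ℝ) (hr : 0 < r) (hr1 : r < 1) :
    ∫ p in Ioo (0:ℝ) 1 ×ˢ Ioo (-Real.pi) Real.pi,
      1 / Real.sqrt (p.1 ^ 2 + r ^ 2 - 2 * p.1 * r * Real.cos p.2) =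
      (∫ t in (0:ℝ)..(2 * Real.pi), ffG r t) - 2 * Real.pi * Real.log r
        + 2 * Real.pi * Real.log 2 := by
  have hpi := Real.pi_pos
  have hle : -Real.pi ≤ Real.pi := by linarith
  have hae : ∀ᵐ t ∂(volume.restrict (Ioo (-Real.pi) Real.pi)), Real.cos t ^ 2 < 1 := by
    have h0 : ∀ᵐ t : ℝ ∂(volume.restrict (Ioo (-Real.pi) Real.pi)), t ≠ 0 :=
      ae_restrict_of_ae (Measure.ae_ne volume 0)
    filter_upwards [h0, ae_restrict_mem measurableSet_Ioo] with t h0 ht using aux_cos_sq t ht h0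
  have hin : ∀ c : ℝ, c ^ 2 < 1 →
      ∫ x in Ioo (0:ℝ) 1, 1 / Real.sqrt (x ^ 2 + r ^ 2 - 2 * x * r * c) =
      Real.log (1 - r * c + Real.sqrt (1 + r ^ 2 - 2 * r * c)) -
        (Real.log r + Real.log (1 - c)) := by
    intro c hc
    rw [← (aux_inner_s9 r c hr hc).2, intervalIntegral.integral_of_le zero_le_one,
      integral_Ioc_eq_integral_Ioo]
  have hG := aux_outer r hr hr1
  rw [intervalIntegrable_iff_integrableOn_Ioo_of_le hle, intervalIntegral.integral_of_le hle,
    integral_Ioc_eq_integral_Ioo] at hG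
  have hint : Integrable (fun p : ℝ × ℝ =>
      1 / Real.sqrt (p.1 ^ 2 + r ^ 2 - 2 * p.1 * r * Real.cos p.2))
      ((volume.restrict (Ioo (0:ℝ) 1)).prod (volume.restrict (Ioo (-Real.pi) Real.pi))) := by
    rw [integrable_prod_iff']
    · constructor
      · filter_upwards [hae] with t ht
        exact (intervalIntegrable_iff_integrableOn_Ioo_of_le zero_le_one).1
          (aux_inner_s9 r _ hr ht).1
      · refine hG.1.congr ?_
        filter_upwards [hae] with t ht
        have : ∀ x : ℝ, ‖1 / Real.sqrt (x ^ 2 + r ^ 2 - 2 * x * r * Real.cos t)‖ =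
            1 / Real.sqrt (x ^ 2 + r ^ 2 - 2 * x * r * Real.cos t) := fun x =>
          Real.norm_of_nonneg (by positivity)
        simp only [this]
        rw [hin _ ht, ffG]
    · apply Measurable.aestronglyMeasurable
      fun_prop
  rw [Measure.volume_eq_prod, ← Measure.prod_restrict, integral_prod_symm _ hint, ← hG.2]
  apply integral_congr_ae
  filter_upwards [hae] with t ht
  rw [hin _ ht, ffG]

lemma aux_rot (z : ℂ) (hz0 : z ≠ 0) :
    (∫ w in ball (0:ℂ) 1, 1 / (‖w‖ * ‖z - w‖)) =
    ∫ w in ball (0:ℂ) 1, 1 / (‖w‖ * ‖(‖z‖ : ℂ) - w‖) := by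
  have hn : ‖z‖ ≠ 0 := norm_ne_zero_iff.2 hz0
  have hu : ‖z / (‖z‖ : ℂ)‖ = 1 := by simp [hn]
  let u : Circle := ⟨z / (‖z‖ : ℂ), mem_sphere_zero_iff_norm.2 hu⟩
  have hz : z = (u : ℂ) * (‖z‖ : ℂ) := by
    change z = z / (‖z‖ : ℂ) * (‖z‖ : ℂ)
    rw [div_mul_cancel₀]
    exact_mod_cast hn
  have hmp := (rotation u).measurePreserving
  have h := hmp.setIntegral_preimage_emb (rotation u).toHomeomorph.measurableEmbedding
    (fun w => 1 / (‖w‖ * ‖z - w‖)) (ball (0:ℂ) 1)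
  rw [← h]
  have hb : (rotation u) ⁻¹' (ball (0:ℂ) 1) = ball 0 1 := by
    ext w
    rw [mem_preimage, mem_ball_zero_iff, mem_ball_zero_iff, LinearIsometryEquiv.norm_map]
  rw [hb]
  congr 1
  ext w
  have : z - rotation u w = u * ((‖z‖ : ℂ) - w) := by
    rw [rotation_apply, mul_sub, ← hz]
  have hu2 : ‖(u : ℂ)‖ = 1 := hu
  rw [this, norm_mul, hu2, one_mul, LinearIsometryEquiv.norm_map]

lemma aux_norm (r ρ t : ℝ) : ‖(r : ℂ) - ρ * (Real.cos t + Real.sin t * Complex.I)‖ =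
    Real.sqrt (ρ ^ 2 + r ^ 2 - 2 * ρ * r * Real.cos t) := by
  have : (r : ℂ) - ρ * (Real.cos t + Real.sin t * Complex.I) =
      ((r - ρ * Real.cos t : ℝ) : ℂ) + ((-(ρ * Real.sin t) : ℝ) : ℂ) * Complex.I := by
    push_cast; ring
  rw [this, Complex.norm_add_mul_I]
  congr 1
  have := Real.sin_sq_add_cos_sq t
  linear_combination ρ ^ 2 * this

lemma aux_norm2 (ρ t : ℝ) (h : 0 < ρ) :
    ‖(ρ : ℂ) * (Real.cos t + Real.sin t * Complex.I)‖ = ρ := by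
  rw [norm_mul, Complex.norm_add_mul_I]
  simp [abs_of_pos h]

lemma aux_polar (r : ℝ) :
    (∫ w in ball (0:ℂ) 1, 1 / (‖w‖ * ‖(r : ℂ) - w‖)) =
    ∫ p in Ioo (0:ℝ) 1 ×ˢ Ioo (-Real.pi) Real.pi,
      1 / Real.sqrt (p.1 ^ 2 + r ^ 2 - 2 * p.1 * r * Real.cos p.2) := by
  rw [← integral_indicator measurableSet_ball, ← Complex.integral_comp_polarCoord_symm,
    polarCoord_target, ← integral_indicator (measurableSet_Ioi.prod measurableSet_Ioo),
    ← integral_indicator (measurableSet_Ioo.prod measurableSet_Ioo)]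
  congr 1
  ext ⟨ρ, t⟩
  by_cases h : 0 < ρ ∧ t ∈ Ioo (-Real.pi) Real.pi
  · rw [indicator_of_mem (show (ρ, t) ∈ Ioi (0:ℝ) ×ˢ Ioo (-Real.pi) Real.pi from h)]
    rw [Complex.polarCoord_symm_apply]
    by_cases h1 : ρ < 1
    · rw [indicator_of_mem, indicator_of_mem]
      · simp only [smul_eq_mul]
        rw [aux_norm, aux_norm2 _ _ h.1]
        have := h.1.ne'
        field_simp
      · exact ⟨⟨h.1, h1⟩, h.2⟩
      · rw [mem_ball_zero_iff, aux_norm2 _ _ h.1]; exact h1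
    · rw [indicator_of_notMem, indicator_of_notMem]
      · simp
      · exact fun hh => h1 hh.1.2
      · rw [mem_ball_zero_iff, aux_norm2 _ _ h.1]; exact h1
  · rw [indicator_of_notMem, indicator_of_notMem]
    · exact fun hh => h ⟨hh.1.1, hh.2⟩
    · exact fun hh => h hh

lemma aux_bound (r : ℝ) (hr : 0 < r) (hr1 : r < 1) :
    ∫ t in (0:ℝ)..(2 * Real.pi), ffG r t ≤ 2 * Real.pi * Real.log (2 * (1 + r)) := by
  have hpi := Real.pi_pos
  have := intervalIntegral.integral_mono_on (a := 0) (b := 2 * Real.pi) (μ := volume)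
    (f := ffG r) (g := fun _ => Real.log (2 * (1 + r))) (by positivity)
    ((ffG_cont r hr hr1).intervalIntegrable _ _) intervalIntegrable_const (by
      intro t _
      refine Real.log_le_log (ffG_pos r t hr hr1) ?_
      have hc := Real.neg_one_le_cos t
      have : Real.sqrt (1 + r ^ 2 - 2 * r * Real.cos t) ≤ 1 + r := by
        rw [Real.sqrt_le_left (by positivity)]
        nlinarith
      nlinarith)
  simpa using this

/-- Lemma 2.5: evaluation and bound for `∫_𝔻 dA(w)/(|w||z-w|)`. -/
theorem stmt9 (z : ℂ) (hz : z ∈ ball (0:ℂ) 1) (hz0 : z ≠ 0) :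
    (∫ w in ball (0:ℂ) 1, 1 / (‖w‖ * ‖z - w‖)) =
      (∫ t in (0:ℝ)..(2 * Real.pi),
        Real.log (1 - ‖z‖ * Real.cos t +
          Real.sqrt (1 + ‖z‖ ^ 2 - 2 * ‖z‖ * Real.cos t))) -
        2 * Real.pi * Real.log ‖z‖ + 2 * Real.pi * Real.log 2 ∧
    (∫ w in ball (0:ℂ) 1, 1 / (‖w‖ * ‖z - w‖)) ≤
      2 * Real.pi * Real.log (4 * (1 + ‖z‖)) - 2 * Real.pi * Real.log ‖z‖ := by
  have hr : 0 < ‖z‖ := norm_pos_iff.2 hz0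
  have hr1 : ‖z‖ < 1 := mem_ball_zero_iff.1 hz
  have h := ((aux_rot z hz0).trans (aux_polar ‖z‖)).trans (aux_prod ‖z‖ hr hr1)
  refine ⟨h, ?_⟩
  rw [h]
  have hb := aux_bound ‖z‖ hr hr1
  have h4 : Real.log (4 * (1 + ‖z‖)) = Real.log (2 * (1 + ‖z‖)) + Real.log 2 := by
    rw [← Real.log_mul (by positivity) (by norm_num)]
    congr 1
    ring
  rw [h4]
  linarith
end
end

section
/- Let M₂ > 0 and M₁ ≥ 0 be constants and define, for x ∈ (0,1), φ(x) = 1/((4/π)M₂ + (2/3)M₁) − (4M₂/π)·x(2−x)/(1−x)² − 2M₁·[log(4(1+x)) − log x]·(2+x)x. Then φ is continuous and strictly decreasing on (0,1), lim_{x→0⁺} φ(x) = 1/((4/π)M₂ + (2/3)M₁) > 0, lim_{x→1⁻} φ(x) = −∞, and there is a unique x₀ ∈ (0,1) with φ(x₀) = 0. -/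
open Metric MeasureTheory Set Filter

noncomputable section

theorem aux_mono (x y : ℝ) (hx : 0 < x) (hxy : x < y) :
    (Real.log (4 * (1 + x)) - Real.log x) * ((2 + x) * x) ≤
    (Real.log (4 * (1 + y)) - Real.log y) * ((2 + y) * y) := by
  have hy : 0 < y := hx.trans hxy
  have h1 : 1 ≤ Real.log (4 * (1 + y)) - Real.log y := by
    rw [← Real.log_div (by positivity) hy.ne', Real.le_log_iff_exp_le (by positivity),
      le_div_iff₀ hy]
    nlinarith [Real.exp_one_lt_d9]
  have h2 : (Real.log (4 * (1 + x)) - Real.log x) - (Real.log (4 * (1 + y)) - Real.log y)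
      ≤ (y - x) / ((1 + y) * x) := by
    rw [← Real.log_div (by positivity) hy.ne', ← Real.log_div (by positivity) hx.ne',
      ← Real.log_div (by positivity) (by positivity)]
    refine (Real.log_le_sub_one_of_pos (by positivity)).trans (le_of_eq ?_)
    field_simp
    ring
  have h3 : (y - x) / ((1 + y) * x) * ((2 + x) * x) ≤ 2 * (y - x) := by
    have : (y - x) / ((1 + y) * x) * ((2 + x) * x) = (y - x) * (2 + x) / (1 + y) := by
      field_simp
    rw [this, div_le_iff₀ (by positivity)]
    nlinarith
  have h4 := mul_le_mul_of_nonneg_right h2 (show 0 ≤ (2 + x) * x by positivity)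
  have h5 : 0 ≤ (y - x) * (2 + x + y) := mul_nonneg (by linarith) (by linarith)
  have h6 := mul_le_mul_of_nonneg_right h1 h5
  have h7 : 0 ≤ (y - x) * (x + y) := mul_nonneg (by linarith) (by linarith)
  nlinarith

/-- Lemma 2.7: properties of the function `φ`. -/
theorem stmt10 (M₁ M₂ : ℝ) (hM₁ : 0 ≤ M₁) (hM₂ : 0 < M₂) (φ : ℝ → ℝ)
    (hφ : ∀ x : ℝ, φ x = 1 / (4 / Real.pi * M₂ + 2 / 3 * M₁) -
        4 * M₂ / Real.pi * (x * (2 - x) / (1 - x) ^ 2) -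
        2 * M₁ * (Real.log (4 * (1 + x)) - Real.log x) * ((2 + x) * x)) :
    ContinuousOn φ (Set.Ioo 0 1) ∧
    StrictAntiOn φ (Set.Ioo 0 1) ∧
    Filter.Tendsto φ (nhdsWithin 0 (Set.Ioi 0))
      (nhds (1 / (4 / Real.pi * M₂ + 2 / 3 * M₁))) ∧
    0 < 1 / (4 / Real.pi * M₂ + 2 / 3 * M₁) ∧
    Filter.Tendsto φ (nhdsWithin 1 (Set.Iio 1)) Filter.atBot ∧
    ∃! x₀ : ℝ, x₀ ∈ Set.Ioo (0:ℝ) 1 ∧ φ x₀ = 0 := by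
  have hpi := Real.pi_pos
  have hA : 0 < 4 * M₂ / Real.pi := by positivity
  have hC : 0 < 1 / (4 / Real.pi * M₂ + 2 / 3 * M₁) := by positivity
  set C := 1 / (4 / Real.pi * M₂ + 2 / 3 * M₁) with hCdef
  set A := 4 * M₂ / Real.pi with hAdef
  have hcat : ∀ x : ℝ, 0 ≤ x → x < 1 → ContinuousAt φ x := by
    intro x hx0 hx1
    have hfun : φ = fun x => C - A * (x * (2 - x) / (1 - x) ^ 2) -
        2 * M₁ * (2 + x) * (Real.log (4 * (1 + x)) * x - x * Real.log x) := by
      funext x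
      rw [hφ]
      ring
    rw [hfun]
    have c1 : ContinuousAt (fun x : ℝ => x * Real.log x) x :=
      Real.continuous_mul_log.continuousAt
    have c2 : ContinuousAt (fun x : ℝ => Real.log (4 * (1 + x))) x :=
      ContinuousAt.log (by fun_prop) (by positivity)
    have c3 : ContinuousAt (fun x : ℝ => x * (2 - x) / (1 - x) ^ 2) x :=
      ContinuousAt.div (by fun_prop) (by fun_prop) (pow_ne_zero _ (by linarith))
    fun_prop
  have hcont : ContinuousOn φ (Set.Ioo 0 1) := fun x hx =>
    (hcat x hx.1.le hx.2).continuousWithinAt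
  have hanti : StrictAntiOn φ (Set.Ioo 0 1) := by
    intro x hx y hy hxy
    have e : ∀ z : ℝ, z < 1 → z * (2 - z) / (1 - z) ^ 2 = 1 / (1 - z) ^ 2 - 1 := by
      intro z hz
      have : 1 - z ≠ 0 := by linarith
      field_simp
      ring
    have h1 : x * (2 - x) / (1 - x) ^ 2 < y * (2 - y) / (1 - y) ^ 2 := by
      rw [e x hx.2, e y hy.2]
      have := hy.2
      have h : 1 / (1 - x) ^ 2 < 1 / (1 - y) ^ 2 := by
        apply one_div_lt_one_div_of_lt
        · exact pow_pos (by linarith) 2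
        · exact pow_lt_pow_left₀ (by linarith) (by linarith) (by norm_num)
      linarith
    have h2 := mul_lt_mul_of_pos_left h1 hA
    have h3 := mul_le_mul_of_nonneg_left (aux_mono x y hx.1 hxy)
      (show 0 ≤ 2 * M₁ by linarith)
    rw [hφ x, hφ y]
    linarith
  have hlim0 : Filter.Tendsto φ (nhdsWithin 0 (Set.Ioi 0)) (nhds C) := by
    have h := (hcat 0 le_rfl one_pos).tendsto
    have h0 : φ 0 = C := by rw [hφ]; simp
    rw [h0] at h
    exact h.mono_left nhdsWithin_le_nhds
  have hlim1 : Filter.Tendsto φ (nhdsWithin 1 (Set.Iio 1)) Filter.atBot := by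
    have t1 : Filter.Tendsto (fun x : ℝ => (1 - x) ^ 2) (nhdsWithin 1 (Set.Iio 1))
        (nhdsWithin 0 (Set.Ioi 0)) := by
      apply tendsto_nhdsWithin_of_tendsto_nhds_of_eventually_within
      · have : ContinuousAt (fun x : ℝ => (1 - x) ^ 2) 1 := by fun_prop
        have h := this.tendsto
        norm_num at h
        exact h.mono_left nhdsWithin_le_nhds
      · filter_upwards [self_mem_nhdsWithin] with x hx
        have h1 : 0 < 1 - x := sub_pos.mpr hx
        exact pow_pos h1 2
    have t2 := t1.inv_tendsto_nhdsGT_zero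
    have t3 : Filter.Tendsto (fun x : ℝ => -A * (x * (2 - x)))
        (nhdsWithin 1 (Set.Iio 1)) (nhds (-A * (1 * (2 - 1)))) := by
      have : ContinuousAt (fun x : ℝ => -A * (x * (2 - x))) 1 := by fun_prop
      exact this.tendsto.mono_left nhdsWithin_le_nhds
    have t4 := t3.neg_mul_atTop (by linarith) t2
    have c2 : ContinuousAt (fun x : ℝ => Real.log (4 * (1 + x))) 1 :=
      ContinuousAt.log (by fun_prop) (by norm_num)
    have c1 : ContinuousAt (fun x : ℝ => Real.log x) 1 :=
      Real.continuousAt_log (by norm_num)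
    have t5 : ContinuousAt (fun x : ℝ => C -
        2 * M₁ * (Real.log (4 * (1 + x)) - Real.log x) * ((2 + x) * x)) 1 := by
      fun_prop
    have t6 := (t5.tendsto.mono_left (nhdsWithin_le_nhds (s := Set.Iio 1))).add_atBot t4
    refine t6.congr ?_
    intro x
    rw [hφ]
    simp only [Pi.inv_apply]
    ring
  refine ⟨hcont, hanti, hlim0, hC, hlim1, ?_⟩
  obtain ⟨a, ha, ha0, ha1⟩ := ((hlim0.eventually (lt_mem_nhds hC)).and
    (Ioo_mem_nhdsGT (show (0:ℝ) < 1 by norm_num))).exists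
  obtain ⟨b, hb, hb0, hb1⟩ := ((hlim1.eventually (eventually_lt_atBot 0)).and
    (Ioo_mem_nhdsLT (show (0:ℝ) < 1 by norm_num))).exists
  obtain ⟨c, hc, hc0⟩ := isPreconnected_Ioo.intermediate_value (⟨hb0, hb1⟩ : b ∈ Set.Ioo (0:ℝ) 1)
    (⟨ha0, ha1⟩ : a ∈ Set.Ioo (0:ℝ) 1) hcont ⟨hb.le, ha.le⟩
  exact ⟨c, ⟨hc, hc0⟩, fun y hy => hanti.injOn hy.1 hc (hy.2.trans hc0.symm)⟩
end
end

section
/- Let h be a complex-valued harmonic function on 𝔻 with |h(z)| ≤ M for all z ∈ 𝔻, for some constant M > 0. Then for every z ∈ 𝔻: |h_z(z) − h_z(0)| + |h_{z̄}(z) − h_{z̄}(0)| ≤ (4M/π)·|z|(2−|z|)/(1−|z|)². -/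
open Metric MeasureTheory Set Filter

noncomputable section

open ComplexConjugate in
lemma aux_conj (F : ℝ → ℂ) (a b : ℝ) : ∫ t in a..b, conj (F t) = conj (∫ t in a..b, F t) := by
  simp only [intervalIntegral, map_sub, integral_conj]

open Complex in
lemma aux_intA (f : ℂ → ℂ) (hf : DifferentiableOn ℂ f (ball (0:ℂ) 1)) (ρ : ℝ) (h0 : 0 < ρ) (h1 : ρ < 1) (n : ℕ) :
    ∫ t in (0:ℝ)..(2 * Real.pi), exp (-(n * t * I)) * f (circleMap 0 ρ t) =
      2 * Real.pi * ρ ^ n * (iteratedDeriv n f 0 / n.factorial) := by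
  have hd : DiffContOnCl ℂ f (ball 0 ρ) := by
    apply DifferentiableOn.diffContOnCl
    rw [closure_ball _ h0.ne']
    exact hf.mono (closedBall_subset_ball h1)
  have := hd.circleIntegral_one_div_sub_center_pow_smul h0 n
  simp only [circleIntegral, deriv_circleMap, sub_zero, smul_eq_mul] at this
  have e : ∀ t : ℝ, circleMap 0 ρ t * I * (1 / circleMap 0 ρ t ^ (n+1) * f (circleMap 0 ρ t))
      = (I / ρ ^ n) * (exp (-(n * t * I)) * f (circleMap 0 ρ t)) := by
    intro t
    have hr : (ρ : ℂ) ≠ 0 := by exact_mod_cast h0.ne'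
    have : circleMap 0 ρ t ≠ 0 := circleMap_ne_center h0.ne'
    have h2 : exp (-(n * t * I)) = ρ ^ n / (circleMap 0 ρ t) ^ n := by
      simp only [circleMap, zero_add, mul_pow, ← exp_nat_mul, exp_neg]
      field_simp
    rw [h2]
    field_simp
    ring
  simp only [e] at this
  rw [intervalIntegral.integral_const_mul] at this
  have hr : (ρ : ℂ) ≠ 0 := by exact_mod_cast h0.ne'
  have hI := I_ne_zero
  generalize (∫ t in (0:ℝ)..(2 * Real.pi), exp (-(n * t * I)) * f (circleMap 0 ρ t)) = J at this ⊢
  have hfac : (n.factorial : ℂ) ≠ 0 := by exact_mod_cast n.factorial_ne_zero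
  field_simp at this ⊢
  linear_combination this

open Complex in
lemma aux_intB (f : ℂ → ℂ) (hf : DifferentiableOn ℂ f (ball (0:ℂ) 1)) (ρ : ℝ) (h0 : 0 < ρ) (h1 : ρ < 1) (n : ℕ) :
    ∫ t in (0:ℝ)..(2 * Real.pi), exp ((n + 1 : ℕ) * t * I) * f (circleMap 0 ρ t) = 0 := by
  have hd : DiffContOnCl ℂ (fun z => z ^ n * f z) (ball 0 ρ) := by
    apply DifferentiableOn.diffContOnCl
    rw [closure_ball _ h0.ne']
    exact DifferentiableOn.mul (by fun_prop) (hf.mono (closedBall_subset_ball h1))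
  have := hd.circleIntegral_eq_zero h0.le
  simp only [circleIntegral, deriv_circleMap, smul_eq_mul] at this
  have e : ∀ t : ℝ, circleMap 0 ρ t * I * (circleMap 0 ρ t ^ n * f (circleMap 0 ρ t))
      = (I * ρ ^ (n+1)) * (exp ((n + 1 : ℕ) * t * I) * f (circleMap 0 ρ t)) := by
    intro t
    have h2 : exp ((n + 1 : ℕ) * t * I) * ρ ^ (n+1) = (circleMap 0 ρ t) ^ (n+1) := by
      simp only [circleMap, zero_add, mul_pow, ← exp_nat_mul]
      rw [mul_assoc, mul_comm]
    linear_combination (-I * f (circleMap 0 ρ t)) * h2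
  simp only [e] at this
  rw [intervalIntegral.integral_const_mul] at this
  have hr : (ρ : ℂ) ≠ 0 := by exact_mod_cast h0.ne'
  simpa [hr] using this

lemma aux_cos1 : ∫ t in (0:ℝ)..Real.pi, |Real.cos t| = 2 := by
  have hp : Function.Periodic (fun t => |Real.cos t|) Real.pi := fun t => by simp [Real.cos_add_pi]
  have := hp.intervalIntegral_add_eq 0 (-(Real.pi/2))
  rw [zero_add] at this
  rw [this, show -(Real.pi/2) + Real.pi = Real.pi/2 by ring]
  have : ∫ t in (-(Real.pi/2))..(Real.pi/2), |Real.cos t| = ∫ t in (-(Real.pi/2))..(Real.pi/2), Real.cos t := by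
    apply intervalIntegral.integral_congr
    intro t ht
    rw [uIcc_of_le (by linarith [Real.pi_pos])] at ht
    exact abs_of_nonneg (Real.cos_nonneg_of_mem_Icc ht)
  rw [this, integral_cos]; simp; norm_num

lemma aux_cos (n : ℕ) (c : ℝ) :
    ∫ t in (0:ℝ)..(2 * Real.pi), |Real.cos ((n + 1 : ℕ) * t + c)| = 4 := by
  have hp : Function.Periodic (fun t => |Real.cos t|) Real.pi := fun t => by simp [Real.cos_add_pi]
  have hn : ((n + 1 : ℕ) : ℝ) ≠ 0 := by positivity
  rw [intervalIntegral.integral_comp_mul_add (fun t => |Real.cos t|) hn]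
  have := hp.intervalIntegral_add_zsmul_eq (2 * (n+1 : ℕ)) c
    (fun a b => (Continuous.intervalIntegrable (by fun_prop) _ _))
  rw [hp.intervalIntegral_add_eq c 0, zero_add, aux_cos1] at this
  have e : ((n + 1 : ℕ) : ℝ) * (2 * Real.pi) + c = c + ((2 * (n+1 : ℕ) : ℤ)) • Real.pi := by
    simp; ring
  rw [e, mul_zero, zero_add, this]
  push_cast at hn ⊢
  simp
  field_simp
  norm_num

open Complex ComplexConjugate in
lemma aux_coeff (M : ℝ) (hM : 0 < M) (h f g : ℂ → ℂ)
    (hb : ∀ z ∈ ball (0:ℂ) 1, ‖h z‖ ≤ M)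
    (hf : DifferentiableOn ℂ f (ball (0:ℂ) 1)) (hg : DifferentiableOn ℂ g (ball (0:ℂ) 1))
    (he : ∀ z ∈ ball (0:ℂ) 1, h z = f z + conj (g z)) (n : ℕ) :
    ‖iteratedDeriv (n+1) f 0 / (n+1).factorial‖ + ‖iteratedDeriv (n+1) g 0 / (n+1).factorial‖
      ≤ 4 * M / Real.pi := by
  set a := iteratedDeriv (n+1) f 0 / (n+1).factorial with ha
  set b := iteratedDeriv (n+1) g 0 / (n+1).factorial with hbb
  have key : ∀ ρ : ℝ, 0 < ρ → ρ < 1 → (‖a‖ + ‖b‖) * ρ ^ (n+1) ≤ 4 * M / Real.pi := by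
    intro ρ h0 h1
    have hmem : ∀ t : ℝ, circleMap 0 ρ t ∈ ball (0:ℂ) 1 := fun t => by
      simp [abs_of_pos h0, h1]
    have cf : Continuous fun t => f (circleMap 0 ρ t) :=
      hf.continuousOn.comp_continuous (continuous_circleMap 0 ρ) hmem
    have cg : Continuous fun t => g (circleMap 0 ρ t) :=
      hg.continuousOn.comp_continuous (continuous_circleMap 0 ρ) hmem
    have ch : ∀ t, h (circleMap 0 ρ t) = f (circleMap 0 ρ t) + conj (g (circleMap 0 ρ t)) :=
      fun t => he _ (hmem t)
    have A1 := aux_intA f hf ρ h0 h1 (n+1)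
    have A2 := aux_intB f hf ρ h0 h1 n
    have B1 := congrArg conj (aux_intA g hg ρ h0 h1 (n+1))
    have B2 := congrArg conj (aux_intB g hg ρ h0 h1 n)
    rw [← ha] at A1
    rw [← hbb] at B1
    rw [← aux_conj] at B1 B2
    simp only [map_mul, map_neg, ← exp_conj, map_natCast, conj_ofReal, conj_I, map_pow, map_ofNat, map_zero, mul_neg, neg_neg] at B1 B2
    set α : ℂ := exp (-(arg a) * I) with hα
    set β : ℂ := exp (arg b * I) with hβ
    have ea : α * a = ‖a‖ := by
      conv_lhs => rw [← norm_mul_exp_arg_mul_I a]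
      rw [hα, mul_left_comm, ← exp_add]; simp
    have eb : β * conj b = ‖b‖ := by
      conv_lhs => rw [← norm_mul_exp_arg_mul_I b]
      rw [hβ, map_mul, ← exp_conj, mul_left_comm, ← exp_add]; simp
    have main : ∫ t in (0:ℝ)..(2 * Real.pi), (α * exp (-((n+1:ℕ) * t * I)) + β * exp ((n+1:ℕ) * t * I)) * h (circleMap 0 ρ t)
        = ((2 * Real.pi * ((‖a‖ + ‖b‖) * ρ ^ (n+1)) : ℝ) : ℂ) := by
      have : ∀ t : ℝ, (α * exp (-((n+1:ℕ) * t * I)) + β * exp ((n+1:ℕ) * t * I)) * h (circleMap 0 ρ t)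
        = (α * (exp (-((n+1:ℕ) * t * I)) * f (circleMap 0 ρ t)) + β * (exp ((n+1:ℕ) * t * I) * f (circleMap 0 ρ t))) +
          (α * (exp (-((n+1:ℕ) * t * I)) * conj (g (circleMap 0 ρ t))) + β * (exp ((n+1:ℕ) * t * I) * conj (g (circleMap 0 ρ t)))) := by
        intro t; rw [ch]; ring
      simp only [this]
      have cg' : Continuous fun t => conj (g (circleMap 0 ρ t)) := continuous_conj.comp cg
      have C1 : ∀ u : ℝ → ℂ, Continuous u → Continuous fun t : ℝ => α * (exp (-((n+1:ℕ) * t * I)) * u t) :=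
        fun u hu => by fun_prop
      have C2 : ∀ u : ℝ → ℂ, Continuous u → Continuous fun t : ℝ => β * (exp ((n+1:ℕ) * t * I) * u t) :=
        fun u hu => by fun_prop
      rw [intervalIntegral.integral_add, intervalIntegral.integral_add, intervalIntegral.integral_add]
      · simp only [intervalIntegral.integral_const_mul]
        rw [A1, A2, B1, B2]
        push_cast
        rw [← ea, ← eb]
        ring
      · exact (C1 _ cg').intervalIntegrable _ _
      · exact (C2 _ cg').intervalIntegrable _ _
      · exact (C1 _ cf).intervalIntegrable _ _
      · exact (C2 _ cf).intervalIntegrable _ _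
      · exact ((C1 _ cf).add (C2 _ cf)).intervalIntegrable _ _
      · exact ((C1 _ cg').add (C2 _ cg')).intervalIntegrable _ _
    have bd : ∀ t : ℝ, ‖(α * exp (-((n+1:ℕ) * t * I)) + β * exp ((n+1:ℕ) * t * I)) * h (circleMap 0 ρ t)‖
        ≤ 2 * M * |Real.cos ((n+1:ℕ) * t + (arg b + arg a)/2)| := by
      intro t
      have : α * exp (-((n+1:ℕ) * t * I)) + β * exp ((n+1:ℕ) * t * I)
          = exp (((arg b - arg a)/2 : ℝ) * I) * (2 * Complex.cos (((n+1:ℕ) * t + (arg b + arg a)/2 : ℝ))) := by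
        rw [Complex.two_cos, hα, hβ, mul_add, ← exp_add, ← exp_add, ← exp_add, ← exp_add, add_comm]
        congr 2 <;> push_cast <;> ring
      rw [this, norm_mul, norm_mul, norm_exp_ofReal_mul_I, norm_mul, ← ofReal_cos, norm_real, Real.norm_eq_abs]
      have := hb _ (hmem t)
      have h3 := abs_nonneg (Real.cos ((n+1:ℕ) * t + (arg b + arg a)/2))
      simp only [Complex.norm_ofNat]
      nlinarith
    have := intervalIntegral.norm_integral_le_of_norm_le (μ := volume) (a := 0) (b := 2 * Real.pi) Real.two_pi_pos.le
      (ae_of_all _ fun t _ => bd t) (Continuous.intervalIntegrable (by fun_prop) _ _)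
    rw [main, intervalIntegral.integral_const_mul, aux_cos, norm_real] at this
    have := (le_abs_self _).trans this
    rw [le_div_iff₀ Real.pi_pos]
    linarith
  have ht : Tendsto (fun ρ : ℝ => (‖a‖ + ‖b‖) * ρ ^ (n+1)) (nhdsWithin 1 (Iio 1)) (nhds ((‖a‖ + ‖b‖) * 1 ^ (n+1))) := by
    apply Tendsto.mono_left _ nhdsWithin_le_nhds
    exact Continuous.tendsto (by fun_prop) 1
  rw [one_pow, mul_one] at ht
  apply le_of_tendsto ht
  filter_upwards [Ioo_mem_nhdsLT (show (0:ℝ) < 1 by norm_num)] with ρ hρ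
  exact key ρ hρ.1 hρ.2

open Complex in
lemma aux_holo (h : ℂ → ℂ)
    (hh2 : ContDiffOn ℝ 2 h (ball (0:ℂ) 1))
    (hharm : ∀ z ∈ ball (0:ℂ) 1, lap h z = 0) : DifferentiableOn ℂ (wdz h) (ball (0:ℂ) 1) := by
  intro z hz
  apply DifferentiableAt.differentiableWithinAt
  have hc : ContDiffAt ℝ 2 h z := hh2.contDiffAt (isOpen_ball.mem_nhds hz)
  have hs := hc.isSymmSndFDerivAt (by simp)
  have hd : DifferentiableAt ℝ (fderiv ℝ h) z :=
    (hc.fderiv_right (m := 1) (by norm_num)).differentiableAt (by norm_num)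
  have hv : ∀ v, HasFDerivAt (fun w => fderiv ℝ h w v) ((fderiv ℝ (fderiv ℝ h) z).flip v) z := by
    intro v
    have := hd.hasFDerivAt.clm_apply (hasFDerivAt_const v z)
    simpa using this
  have hF : HasFDerivAt (wdz h) ((2:ℂ)⁻¹ • ((fderiv ℝ (fderiv ℝ h) z).flip 1 - I • (fderiv ℝ (fderiv ℝ h) z).flip I)) z := by
    have := ((hv 1).sub ((hv I).const_smul I)).const_smul ((2:ℂ)⁻¹)
    convert! this using 1
    ext w; simp [wdz]; ring
  rw [differentiableAt_complex_iff_differentiableAt_real]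
  refine ⟨hF.differentiableAt, ?_⟩
  have hl := hharm z hz
  rw [lap, (hv 1).fderiv, (hv I).fderiv] at hl
  have := hs 1 I
  rw [hF.fderiv]
  simp at hl this ⊢
  linear_combination (-I/2) * hl - (1/2) * this + (1/2) * (fderiv ℝ (fderiv ℝ h) z 1 I) * I_sq

open Complex ComplexConjugate in
lemma aux_fconj (h : ℂ → ℂ) (w v : ℂ) : fderiv ℝ (fun z => conj (h z)) w v = conj (fderiv ℝ h w v) := by
  have := conjCLE.comp_fderiv (f := h) (x := w)
  have h2 : (conjCLE ∘ h) = fun z => conj (h z) := by ext; simp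
  rw [h2] at this
  rw [this]; simp

open Complex ComplexConjugate in
lemma aux_decomp (h : ℂ → ℂ)
    (hh2 : ContDiffOn ℝ 2 h (ball (0:ℂ) 1))
    (hharm : ∀ z ∈ ball (0:ℂ) 1, lap h z = 0) :
    ∃ f g : ℂ → ℂ, DifferentiableOn ℂ f (ball (0:ℂ) 1) ∧ DifferentiableOn ℂ g (ball (0:ℂ) 1) ∧
      (∀ z ∈ ball (0:ℂ) 1, h z = f z + conj (g z)) ∧
      (∀ z ∈ ball (0:ℂ) 1, wdz h z = deriv f z) ∧
      (∀ z ∈ ball (0:ℂ) 1, wdzbar h z = conj (deriv g z)) := by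
  have hF := aux_holo h hh2 hharm
  have hG := aux_holo (fun z => conj (h z)) (conjCLE.contDiff.comp_contDiffOn hh2) (by
    intro z hz
    have := hharm z hz
    simp only [lap, aux_fconj] at this ⊢
    rw [← map_add, this, map_zero])
  have hK : ∀ z, wdz (fun z => conj (h z)) z = conj (wdzbar h z) := by
    intro z; simp only [wdz, wdzbar, aux_fconj, map_div₀, map_add, map_mul, conj_I, map_ofNat]; ring
  obtain ⟨f, hf⟩ := hF.isExactOn_ball
  obtain ⟨g, hg⟩ := hG.isExactOn_ball
  have dh : DifferentiableOn ℝ h (ball 0 1) := hh2.differentiableOn (by norm_num)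
  have hder : ∀ z ∈ ball (0:ℂ) 1, HasFDerivAt (fun z => f z + conj (g z))  (fderiv ℝ h z) z := by
    intro z hz
    have h1 := (hf z hz).hasFDerivAt.restrictScalars ℝ
    have h2 := (conjCLE : ℂ →L[ℝ] ℂ).hasFDerivAt.comp z ((hg z hz).hasFDerivAt.restrictScalars ℝ)
    convert! h1.add h2 using 1
    ext v
    have : fderiv ℝ h z v = v.re * fderiv ℝ h z 1 + v.im * fderiv ℝ h z I := by
      conv_lhs => rw [show v = v.re • (1:ℂ) + v.im • I by simp [re_add_im]]
      rw [map_add, map_smul, map_smul]; simp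
    rw [this]
    simp [hK]
    have e1 : v = v.re + v.im * I := (re_add_im v).symm
    have e2 : conj v = v.re - v.im * I := by
      apply Complex.ext <;> simp
    rw [e2]
    simp only [wdz, wdzbar]
    linear_combination (-((fderiv ℝ h z 1 - I * fderiv ℝ h z I) / 2)) * e1 + (v.im * fderiv ℝ h z I) * I_sq
  obtain ⟨c, hc⟩ := isOpen_ball.exists_eq_add_of_fderiv_eq (𝕜 := ℝ) (convex_ball (0:ℂ) 1).isPreconnected dh
    (fun z hz => (hder z hz).differentiableAt.differentiableWithinAt)
    (fun z hz => (hder z hz).fderiv.symm)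
  refine ⟨fun z => f z + c, g, fun z hz => ((hf z hz).add_const c).differentiableAt.differentiableWithinAt,
    fun z hz => (hg z hz).differentiableAt.differentiableWithinAt, fun z hz => ?_, fun z hz => ?_, fun z hz => ?_⟩
  · rw [hc hz]; ring
  · rw [((hf z hz).add_const c).deriv]
  · rw [(hg z hz).deriv, hK]; simp

open Complex in
lemma aux_taylor (f : ℂ → ℂ) (hf : DifferentiableOn ℂ f (ball (0:ℂ) 1)) (z : ℂ) (hz : z ∈ ball (0:ℂ) 1) :
    HasSum (fun n : ℕ => ((n:ℂ) + 2) * z ^ (n+1) * (iteratedDeriv (n+1+1) f 0 / (n+1+1).factorial))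
      (deriv f z - deriv f 0) := by
  have h1 := hasSum_taylorSeries_on_ball (f := deriv f) (c := 0) (r := 1) (z := z) (hf.deriv isOpen_ball) hz
  rw [← hasSum_nat_add_iff' 1] at h1
  convert! h1 using 1
  · ext n
    rw [iteratedDeriv_succ', Nat.factorial_succ]
    have : ((n+1).factorial : ℂ) ≠ 0 := by exact_mod_cast (Nat.factorial_ne_zero _)
    have h3 : (n : ℂ) + 1 + 1 ≠ 0 := by exact_mod_cast (Nat.succ_ne_zero (n+1))
    simp only [smul_eq_mul, sub_zero]
    push_cast
    field_simp
    ring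
  · simp

/-- Coefficient estimate consequence for bounded harmonic mappings: a bound on the
differences of the Wirtinger derivatives. -/
theorem stmt13 (M : ℝ) (hM : 0 < M) (h : ℂ → ℂ)
    (hh2 : ContDiffOn ℝ 2 h (ball (0:ℂ) 1))
    (hharm : ∀ z ∈ ball (0:ℂ) 1, lap h z = 0)
    (hb : ∀ z ∈ ball (0:ℂ) 1, ‖h z‖ ≤ M) :
    ∀ z ∈ ball (0:ℂ) 1,
      ‖wdz h z - wdz h 0‖ + ‖wdzbar h z - wdzbar h 0‖ ≤
        4 * M / Real.pi * (‖z‖ * (2 - ‖z‖) / (1 - ‖z‖) ^ 2) := by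
  intro z hz
  obtain ⟨f, g, hf, hg, he, h1, h2⟩ := aux_decomp h hh2 hharm
  have h00 : (0:ℂ) ∈ ball (0:ℂ) 1 := by simp
  rw [h1 z hz, h1 0 h00, h2 z hz, h2 0 h00, ← map_sub, RCLike.norm_conj]
  have hr : ‖z‖ < 1 := by simpa using hz
  have hco := aux_coeff M hM h f g hb hf hg he
  have sf := aux_taylor f hf z hz
  have sg := aux_taylor g hg z hz
  set a : ℕ → ℂ := fun n => iteratedDeriv (n+1) f 0 / (n+1).factorial
  set b : ℕ → ℂ := fun n => iteratedDeriv (n+1) g 0 / (n+1).factorial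
  have hgeo : HasSum (fun n : ℕ => ((n:ℝ) + 2) * ‖z‖ ^ (n+1)) (‖z‖ * (2 - ‖z‖) / (1 - ‖z‖) ^ 2) := by
    have := hasSum_choose_mul_geometric_of_norm_lt_one 1 (r := ‖z‖) (by simpa using hr)
    rw [← hasSum_nat_add_iff' 1] at this
    convert! this using 1
    · ext n
      rw [Nat.choose_one_right]
      push_cast
      ring
    · have : 1 - ‖z‖ ≠ 0 := by linarith
      simp
      field_simp
      ring
  have nf : ∀ (c : ℕ → ℂ) (n : ℕ), ‖((n:ℂ) + 2) * z ^ (n+1) * c (n+1)‖ = ((n:ℝ) + 2) * ‖z‖ ^ (n+1) * ‖c (n+1)‖ := by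
    intro c n
    have : ((n:ℂ) + 2) = ((n + 2 : ℕ) : ℂ) := by push_cast; rfl
    rw [norm_mul, norm_mul, norm_pow, this, Complex.norm_natCast]; push_cast; rfl
  have hsum := hgeo.mul_left (4 * M / Real.pi)
  have pos : ∀ n : ℕ, 0 ≤ ((n:ℝ) + 2) * ‖z‖ ^ (n+1) := fun n => by positivity
  have bdd : ∀ n : ℕ, ((n:ℝ) + 2) * ‖z‖ ^ (n+1) * ‖a (n+1)‖ + ((n:ℝ) + 2) * ‖z‖ ^ (n+1) * ‖b (n+1)‖
      ≤ 4 * M / Real.pi * (((n:ℝ) + 2) * ‖z‖ ^ (n+1)) := by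
    intro n
    have := mul_le_mul_of_nonneg_left (hco (n+1)) (pos n)
    simp only [a, b]
    linarith
  have sa : Summable fun n : ℕ => ((n:ℝ) + 2) * ‖z‖ ^ (n+1) * ‖a (n+1)‖ :=
    Summable.of_nonneg_of_le (fun n => mul_nonneg (pos n) (norm_nonneg _))
      (fun n => by linarith [bdd n, mul_nonneg (pos n) (norm_nonneg (b (n+1)))]) hsum.summable
  have sb : Summable fun n : ℕ => ((n:ℝ) + 2) * ‖z‖ ^ (n+1) * ‖b (n+1)‖ :=
    Summable.of_nonneg_of_le (fun n => mul_nonneg (pos n) (norm_nonneg _))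
      (fun n => by linarith [bdd n, mul_nonneg (pos n) (norm_nonneg (a (n+1)))]) hsum.summable
  have e1 := sf.norm_le_of_bounded sa.hasSum (fun n => (nf a n).le)
  have e2 := sg.norm_le_of_bounded sb.hasSum (fun n => (nf b n).le)
  have e3 := hasSum_le bdd (sa.hasSum.add sb.hasSum) hsum
  linarith
end
end

section
/- Let g be a continuous complex-valued function on the closed unit disk and f ∈ C²(𝔻)∩C(𝕋) with Δf = g on 𝔻, f(0) = 0, J_f(0) = 1, sup_{z∈𝔻}|g(z)| ≤ M₁ and sup_{z∈𝔻}|f(z)| ≤ M₂, where M₁ ≥ 0 and M₂ > 0. Then λ(D_f(0)) = ||f_z(0)| − |f_{z̄}(0)|| ≥ 1/((4/π)M₂ + (2/3)M₁). -/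
open Metric MeasureTheory Set Filter

noncomputable section

open Complex in
def PhiK (k : ℤ) (F : ℂ → ℂ) (ζ : ℂ) : ℂ := F (exp ζ) * exp (-(k * ζ))

open Complex in
def AK (k : ℤ) (F : ℂ → ℂ) (s : ℝ) : ℂ := ∫ t in (0:ℝ)..(2 * Real.pi), PhiK k F (s + t * I)

lemma exp_mem_ball {ζ : ℂ} (h : ζ.re < 0) : Complex.exp ζ ∈ ball (0:ℂ) 1 := by
  simp [Complex.norm_exp, h]

lemma wirt (L : ℂ →L[ℝ] ℂ) (v : ℂ) : L v = v.re * L 1 + v.im * L Complex.I := by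
  have h : v = v.re • (1:ℂ) + v.im • Complex.I := by
    simp [Complex.re_add_im]
  conv_lhs => rw [h, map_add, map_smul, map_smul]
  simp

lemma wdzbar_cont {F : ℂ → ℂ} (hF : ContDiffOn ℝ 1 F (ball (0:ℂ) 1)) :
    ContinuousOn (wdzbar F) (ball (0:ℂ) 1) := by
  have h := (hF.fderiv_of_isOpen (m := 0) isOpen_ball (by simp)).continuousOn
  unfold wdzbar
  fun_prop

open Complex in
lemma phi_hasFDeriv {F : ℂ → ℂ} (k : ℤ) (hF : ContDiffOn ℝ 1 F (ball (0:ℂ) 1)) {ζ : ℂ}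
    (h : ζ.re < 0) : DifferentiableAt ℝ (PhiK k F) ζ ∧
    I • fderiv ℝ (PhiK k F) ζ 1 - fderiv ℝ (PhiK k F) ζ I =
      2 * I * (wdzbar F (exp ζ) * (starRingEnd ℂ) (exp ζ) * exp (-(k * ζ))) := by
  have hd : HasFDerivAt F (fderiv ℝ F (exp ζ)) (exp ζ) :=
    ((hF.differentiableOn one_ne_zero).differentiableAt
      (isOpen_ball.mem_nhds (exp_mem_ball h))).hasFDerivAt
  have he : HasFDerivAt (exp : ℂ → ℂ) _ ζ := ((hasDerivAt_exp ζ).hasFDerivAt.restrictScalars ℝ)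
  have h2 : HasDerivAt (fun ζ : ℂ => exp (-(k * ζ))) (exp (-(k * ζ)) * -(k * 1)) ζ :=
    (((hasDerivAt_id ζ).const_mul (k:ℂ)).neg).cexp
  have h3 := (hd.comp ζ he).mul (h2.hasFDerivAt.restrictScalars ℝ)
  have h4 : HasFDerivAt (PhiK k F) _ ζ := h3
  refine ⟨h4.differentiableAt, ?_⟩
  rw [h4.fderiv]
  simp only [wdzbar, smul_eq_mul, ContinuousLinearMap.add_apply, ContinuousLinearMap.smul_apply,
    ContinuousLinearMap.comp_apply, ContinuousLinearMap.coe_restrictScalars', Function.comp,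
    ContinuousLinearMap.toSpanSingleton_apply]
  rw [wirt _ (1 * exp ζ), wirt _ (I * exp ζ)]
  generalize fderiv ℝ F (exp ζ) 1 = a
  generalize fderiv ℝ F (exp ζ) I = b
  generalize exp (-(k * ζ)) = c
  generalize F (exp ζ) = d
  generalize exp ζ = z
  have hz : (starRingEnd ℂ) z = z.re - z.im * I := by
    apply Complex.ext <;> simp
  rw [hz]
  simp
  linear_combination (a*z.im*c + (I*c*b*z.im - c*z.re*b)) * I_sq 

open Complex in
lemma key {F : ℂ → ℂ} (k : ℤ) (hF : ContDiffOn ℝ 1 F (ball (0:ℂ) 1)) {s₁ s₂ : ℝ}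
    (h12 : s₁ ≤ s₂) (h2 : s₂ < 0) :
    AK k F s₂ - AK k F s₁ = ∫ s in s₁..s₂, ∫ t in (0:ℝ)..(2 * Real.pi),
      2 * (wdzbar F (exp (s + t * I)) * (starRingEnd ℂ) (exp (s + t * I)) *
        exp (-(k * (s + t * I)))) := by
  have hre : ∀ ζ ∈ (uIcc s₁ s₂ ×ℂ uIcc 0 (2 * Real.pi)), ζ.re < 0 := by
    intro ζ hζ
    have := hζ.1
    rw [Set.mem_preimage, uIcc_of_le h12] at this
    exact this.2.trans_lt h2
  have hcomp : IsCompact (uIcc s₁ s₂ ×ℂ uIcc 0 (2 * Real.pi)) := isCompact_uIcc.reProdIm isCompact_uIcc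
  have hcont : ContinuousOn (fun ζ : ℂ => 2 * I * (wdzbar F (exp ζ) * (starRingEnd ℂ) (exp ζ) *
      exp (-(k * ζ)))) (uIcc s₁ s₂ ×ℂ uIcc 0 (2 * Real.pi)) := by
    have h1 : ContinuousOn (fun ζ => wdzbar F (exp ζ)) (uIcc s₁ s₂ ×ℂ uIcc 0 (2 * Real.pi)) :=
      (wdzbar_cont hF).comp (by fun_prop) (fun ζ hζ => exp_mem_ball (hre ζ hζ))
    have h2 : Continuous (fun ζ : ℂ => (starRingEnd ℂ) (exp ζ)) := continuous_conj.comp (by fun_prop)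
    have h3 : Continuous (fun ζ : ℂ => exp (-(k * ζ))) := by fun_prop
    exact continuousOn_const.mul ((h1.mul h2.continuousOn).mul h3.continuousOn)
  have H := integral_boundary_rect_of_differentiableOn_real (PhiK k F) s₁ (s₂ + (2 * Real.pi : ℝ) * I)
    (by
      intro ζ hζ
      refine (phi_hasFDeriv k hF (hre ζ ?_)).1.differentiableWithinAt
      simpa using hζ)
    (by
      have : IntegrableOn (fun ζ : ℂ => 2 * I * (wdzbar F (exp ζ) * (starRingEnd ℂ) (exp ζ) *
        exp (-(k * ζ)))) (uIcc s₁ s₂ ×ℂ uIcc 0 (2 * Real.pi)) := hcont.integrableOn_compact hcomp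
      have h5 := this.congr_fun (g := fun z => I • fderiv ℝ (PhiK k F) z 1 - fderiv ℝ (PhiK k F) z I)
        (fun ζ hζ => (phi_hasFDeriv k hF (hre ζ hζ)).2.symm) hcomp.measurableSet
      simpa using h5)
  have e1 : ((s₁:ℂ)).re = s₁ := by simp
  have e2 : ((s₁:ℂ)).im = 0 := by simp
  have e3 : ((s₂:ℂ) + (2 * Real.pi : ℝ) * I).re = s₂ := by simp
  have e4 : ((s₂:ℂ) + (2 * Real.pi : ℝ) * I).im = 2 * Real.pi := by simp
  rw [e1, e2, e3, e4] at H
  have hper : ∀ x : ℝ, PhiK k F (x + (2 * Real.pi : ℝ) * I) = PhiK k F (x + (0:ℝ) * I) := by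
    intro x
    have a1 : exp ((x:ℂ) + (2 * Real.pi : ℝ) * I) = exp ((x:ℂ) + (0:ℝ) * I) := by
      rw [exp_eq_exp_iff_exists_int]
      exact ⟨1, by push_cast; ring⟩
    have a2 : exp (-(k * ((x:ℂ) + (2 * Real.pi : ℝ) * I))) = exp (-(k * ((x:ℂ) + (0:ℝ) * I))) := by
      rw [exp_eq_exp_iff_exists_int]
      exact ⟨-k, by push_cast; ring⟩
    simp only [PhiK, a1, a2]
  simp only [hper, sub_self, zero_add] at H
  have hR : (∫ x : ℝ in s₁..s₂, ∫ y : ℝ in (0:ℝ)..(2 * Real.pi),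
        I • fderiv ℝ (PhiK k F) (x + y * I) 1 - fderiv ℝ (PhiK k F) (x + y * I) I) =
      I * ∫ s in s₁..s₂, ∫ t in (0:ℝ)..(2 * Real.pi),
      2 * (wdzbar F (exp (s + t * I)) * (starRingEnd ℂ) (exp (s + t * I)) *
        exp (-(k * (s + t * I)))) := by
    rw [← intervalIntegral.integral_const_mul]
    apply intervalIntegral.integral_congr
    intro x hx
    rw [uIcc_of_le h12] at hx
    simp only
    rw [← intervalIntegral.integral_const_mul]
    apply intervalIntegral.integral_congr
    intro y hy
    simp only
    rw [(phi_hasFDeriv k hF (ζ := x + y * I) (by simpa using hx.2.trans_lt h2)).2]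
    ring
  rw [hR] at H
  have : I * (AK k F s₂ - AK k F s₁) = I * ∫ s in s₁..s₂, ∫ t in (0:ℝ)..(2 * Real.pi),
      2 * (wdzbar F (exp (s + t * I)) * (starRingEnd ℂ) (exp (s + t * I)) *
        exp (-(k * (s + t * I)))) := by
    rw [← H]; simp only [AK, smul_eq_mul]; ring
  exact mul_left_cancel₀ I_ne_zero this

open Complex in
lemma conj_fderiv {F : ℂ → ℂ} {z : ℂ} (h : DifferentiableAt ℝ F z) (v : ℂ) :
    fderiv ℝ (fun w => (starRingEnd ℂ) (F w)) z v = (starRingEnd ℂ) (fderiv ℝ F z v) := by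
  have := (conjCLE.toContinuousLinearMap.hasFDerivAt (x := F z)).comp z h.hasFDerivAt
  have h2 : HasFDerivAt (fun w => (starRingEnd ℂ) (F w)) _ z := this
  rw [h2.fderiv]
  simp

open Complex in
lemma wdzbar_conj {F : ℂ → ℂ} {z : ℂ} (h : DifferentiableAt ℝ F z) :
    wdzbar (fun w => (starRingEnd ℂ) (F w)) z = (starRingEnd ℂ) (wdz F z) := by
  simp only [wdzbar, wdz, conj_fderiv h]
  simp [sub_eq_add_neg, map_ofNat]

open Complex in
lemma wdz_conj {F : ℂ → ℂ} {z : ℂ} (h : DifferentiableAt ℝ F z) :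
    wdz (fun w => (starRingEnd ℂ) (F w)) z = (starRingEnd ℂ) (wdzbar F z) := by
  simp only [wdzbar, wdz, conj_fderiv h]
  simp [sub_eq_add_neg, map_ofNat]

lemma contDiffOn_conj {F : ℂ → ℂ} {n : ℕ∞} {s : Set ℂ} (hF : ContDiffOn ℝ n F s) :
    ContDiffOn ℝ n (fun w => (starRingEnd ℂ) (F w)) s :=
  Complex.conjCLE.toContinuousLinearMap.contDiff.comp_contDiffOn hF

lemma fderiv_c1 {f : ℂ → ℂ} (hf : ContDiffOn ℝ 2 f (ball (0:ℂ) 1)) :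
    ContDiffOn ℝ 1 (fderiv ℝ f) (ball (0:ℂ) 1) :=
  hf.fderiv_of_isOpen isOpen_ball (by norm_num)

lemma wdzbar_c1 {f : ℂ → ℂ} (hf : ContDiffOn ℝ 2 f (ball (0:ℂ) 1)) :
    ContDiffOn ℝ 1 (wdzbar f) (ball (0:ℂ) 1) := by
  have h := fderiv_c1 hf
  have h1 : ContDiffOn ℝ 1 (fun z => fderiv ℝ f z 1) (ball (0:ℂ) 1) := h.clm_apply contDiffOn_const
  have h2 : ContDiffOn ℝ 1 (fun z => fderiv ℝ f z Complex.I) (ball (0:ℂ) 1) :=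
    h.clm_apply contDiffOn_const
  unfold wdzbar
  exact (h1.add (contDiffOn_const.mul h2)).div_const 2

lemma lap_conj {f : ℂ → ℂ} (hf : ContDiffOn ℝ 2 f (ball (0:ℂ) 1)) {z : ℂ}
    (hz : z ∈ ball (0:ℂ) 1) :
    lap (fun w => (starRingEnd ℂ) (f w)) z = (starRingEnd ℂ) (lap f z) := by
  have hn := isOpen_ball.mem_nhds hz
  have h : DifferentiableAt ℝ (fderiv ℝ f) z :=
    ((fderiv_c1 hf).differentiableOn one_ne_zero).differentiableAt hn
  have e : ∀ v : ℂ, (fun w => fderiv ℝ (fun w => (starRingEnd ℂ) (f w)) w v) =ᶠ[nhds z]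
      (fun w => (starRingEnd ℂ) (fderiv ℝ f w v)) := by
    intro v
    filter_upwards [hn] with w hw
    exact conj_fderiv ((hf.differentiableOn two_ne_zero).differentiableAt (isOpen_ball.mem_nhds hw)) v
  simp only [lap]
  rw [(e 1).fderiv_eq, (e Complex.I).fderiv_eq, conj_fderiv (by fun_prop), conj_fderiv (by fun_prop), map_add]

lemma wdz_wdzbar {f : ℂ → ℂ} (hf : ContDiffOn ℝ 2 f (ball (0:ℂ) 1)) {z : ℂ}
    (hz : z ∈ ball (0:ℂ) 1) : wdz (wdzbar f) z = lap f z / 4 := by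
  have hn := isOpen_ball.mem_nhds hz
  have h : DifferentiableAt ℝ (fderiv ℝ f) z :=
    ((fderiv_c1 hf).differentiableOn one_ne_zero).differentiableAt hn
  have hs : IsSymmSndFDerivAt ℝ f z := (hf.contDiffAt hn).isSymmSndFDerivAt (by simp)
  have e : ∀ v w : ℂ, fderiv ℝ (fun y => fderiv ℝ f y v) z w = fderiv ℝ (fderiv ℝ f) z w v := by
    intro v w
    have := h.hasFDerivAt.clm_apply (hasFDerivAt_const v z)
    rw [this.fderiv]; simp
  have hb : HasFDerivAt (wdzbar f) ((2:ℂ)⁻¹ • (fderiv ℝ (fun y => fderiv ℝ f y 1) z +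
      Complex.I • fderiv ℝ (fun y => fderiv ℝ f y Complex.I) z)) z := by
    have h1 : DifferentiableAt ℝ (fun y => fderiv ℝ f y 1) z := by fun_prop
    have h2 : DifferentiableAt ℝ (fun y => fderiv ℝ f y Complex.I) z := by fun_prop
    have := (h1.hasFDerivAt.add (h2.hasFDerivAt.const_mul Complex.I)).const_mul (2:ℂ)⁻¹
    refine this.congr_of_eventuallyEq (Eventually.of_forall fun y => ?_)
    simp [wdzbar, div_eq_inv_mul]
  simp only [wdz, lap, hb.fderiv]
  simp only [ContinuousLinearMap.add_apply, ContinuousLinearMap.smul_apply, e, smul_eq_mul]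
  rw [hs 1 Complex.I]
  linear_combination (-(fderiv ℝ (fderiv ℝ f) z Complex.I Complex.I)/4) * Complex.I_sq

lemma int_cos (c : ℝ) : ∫ t in (0:ℝ)..(2 * Real.pi), |Real.cos (t + c)| = 4 := by
  rw [intervalIntegral.integral_comp_add_right (fun t => |Real.cos t|)]
  have hp : Function.Periodic (fun t => |Real.cos t|) (2 * Real.pi) := by
    intro t; simp [Real.cos_add_two_pi]
  have := hp.intervalIntegral_add_eq (0 + c) (-(Real.pi/2))
  rw [show 2 * Real.pi + c = 0 + c + 2 * Real.pi by ring, this]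
  have hc : Continuous (fun t => |Real.cos t|) := by fun_prop
  rw [← intervalIntegral.integral_add_adjacent_intervals (b := Real.pi/2)
    (hc.intervalIntegrable _ _) (hc.intervalIntegrable _ _)]
  have h1 : ∫ t in (-(Real.pi/2))..(Real.pi/2), |Real.cos t| = ∫ t in (-(Real.pi/2))..(Real.pi/2), Real.cos t := by
    apply intervalIntegral.integral_congr
    intro t ht
    rw [uIcc_of_le (by linarith [Real.pi_pos])] at ht
    exact abs_of_nonneg (Real.cos_nonneg_of_mem_Icc ht)
  have h2 : ∫ t in (Real.pi/2)..(-(Real.pi/2) + 2 * Real.pi), |Real.cos t| = ∫ t in (Real.pi/2)..(-(Real.pi/2) + 2 * Real.pi), -Real.cos t := by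
    apply intervalIntegral.integral_congr
    intro t ht
    rw [uIcc_of_le (by linarith [Real.pi_pos])] at ht
    exact abs_of_nonpos (Real.cos_nonpos_of_pi_div_two_le_of_le ht.1 (by linarith [ht.2]))
  rw [h1, h2, intervalIntegral.integral_neg, integral_cos, integral_cos]
  simp [Real.sin_add_two_pi]
  norm_num

open Complex in
lemma int_uv (u v : ℂ) (hu : ‖u‖ = 1) (hv : ‖v‖ = 1) :
    ∫ t in (0:ℝ)..(2 * Real.pi), ‖u * exp (-(t * I)) + v * exp (t * I)‖ = 8 := by
  obtain ⟨a, rfl⟩ := (Complex.norm_eq_one_iff u).1 hu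
  obtain ⟨b, rfl⟩ := (Complex.norm_eq_one_iff v).1 hv
  have : ∀ t : ℝ, ‖exp (a * I) * exp (-(t * I)) + exp (b * I) * exp (t * I)‖ =
      2 * |Real.cos (t + (b - a) / 2)| := by
    intro t
    have : exp (a * I) * exp (-(t * I)) + exp (b * I) * exp (t * I) =
      exp (((a + b) / 2 : ℝ) * I) * ((2 * Real.cos (t + (b - a) / 2) : ℝ) : ℂ) := by
      push_cast
      rw [Complex.two_cos, mul_add, ← exp_add, ← exp_add, ← exp_add, ← exp_add, add_comm]
      congr 1 <;> congr 1 <;> push_cast <;> ring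
    rw [this, norm_mul, norm_exp_ofReal_mul_I, one_mul, norm_real, Real.norm_eq_abs, abs_mul]
    simp
  simp only [this]
  rw [intervalIntegral.integral_const_mul, int_cos]
  norm_num

open Complex in
def HK (f : ℂ → ℂ) (s : ℝ) : ℂ := ∫ t in (0:ℝ)..(2 * Real.pi),
      2 * (wdzbar f (exp (s + t * I)) * (starRingEnd ℂ) (exp (s + t * I)) *
        exp (-((1:ℤ) * (s + t * I))))

open Complex in
lemma HK_norm (f : ℂ → ℂ) (s : ℝ) :
    ‖HK f s‖ = 2 * Real.exp (-2 * s) * ‖AK (-2) (fun w => (starRingEnd ℂ) (wdzbar f w)) s‖ := by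
  have : HK f s = (2 * Real.exp (-2 * s) : ℝ) *
      (starRingEnd ℂ) (AK (-2) (fun w => (starRingEnd ℂ) (wdzbar f w)) s) := by
    unfold AK HK PhiK
    rw [intervalIntegral.integral_of_le (by positivity), intervalIntegral.integral_of_le (by positivity),
      ← integral_conj, ← MeasureTheory.integral_const_mul]
    congr 1
    ext t
    rw [map_mul, conj_conj, ← exp_conj, ← exp_conj]
    have e1 : exp ((starRingEnd ℂ) (↑s + ↑t * I)) * exp (-((1:ℤ) * (↑s + ↑t * I))) =
      Real.exp (-2 * s) * exp ((starRingEnd ℂ) (-(((-2:ℤ):ℂ) * (↑s + ↑t * I)))) := by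
      rw [ofReal_exp, ← exp_add, ← exp_add]
      congr 1
      simp [map_ofNat]
      ring
    push_cast at e1 ⊢
    linear_combination 2 * wdzbar f (cexp (↑s + ↑t * I)) * e1
  rw [this, norm_mul, norm_conj, norm_real, Real.norm_of_nonneg (by positivity)]

open Complex in
lemma AK2_lim {h : ℂ → ℂ} (hc : ContinuousAt h 0) :
    Tendsto (fun s => ‖AK (-2) h s‖) atBot (nhds 0) := by
  obtain ⟨δ, hδ, H⟩ := Metric.continuousAt_iff.1 hc 1 one_pos
  have hb : ∀ᶠ s : ℝ in atBot, ‖AK (-2) h s‖ ≤ (‖h 0‖ + 1) * (Real.exp s * Real.exp s) * |2 * Real.pi - 0| := by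
    have : ∀ᶠ s : ℝ in atBot, Real.exp s < δ := Real.tendsto_exp_atBot.eventually (gt_mem_nhds hδ)
    filter_upwards [this] with s hs
    apply intervalIntegral.norm_integral_le_of_norm_le_const
    intro t ht
    unfold PhiK
    rw [norm_mul]
    have h1 : ‖h (exp (s + t * I))‖ ≤ ‖h 0‖ + 1 := by
      have := H (x := exp (s + t * I)) (by simpa [norm_exp] using hs)
      rw [dist_eq_norm] at this
      have := norm_sub_norm_le (h (exp (s + t * I))) (h 0)
      linarith
    have h2 : ‖exp (-(((-2:ℤ):ℂ) * (s + t * I)))‖ = Real.exp s * Real.exp s := by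
      rw [norm_exp, ← Real.exp_add]
      congr 1
      simp
      ring
    rw [h2]
    gcongr
  refine squeeze_zero' (Eventually.of_forall fun s => norm_nonneg _) hb ?_
  have := ((Real.tendsto_exp_atBot.mul Real.tendsto_exp_atBot).const_mul (‖h 0‖ + 1)).mul_const |2 * Real.pi - 0|
  simpa using this

open Complex in
lemma HK_bound {f : ℂ → ℂ} {M : ℝ} (hf : ContDiffOn ℝ 2 f (ball (0:ℂ) 1))
    (hM : ∀ z ∈ ball (0:ℂ) 1, ‖lap f z‖ ≤ M) {s : ℝ} (hs : s < 0) :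
    ‖HK f s‖ ≤ 2 * Real.pi * M / 3 * Real.exp s := by
  have hM0 : 0 ≤ M := (norm_nonneg _).trans (hM 0 (by simp))
  have h1 := wdzbar_c1 hf
  set h := fun w => (starRingEnd ℂ) (wdzbar f w) with hh
  have hh1 : ContDiffOn ℝ 1 h (ball (0:ℂ) 1) := contDiffOn_conj (n := 1) h1
  have hlim := AK2_lim (hh1.continuousOn.continuousAt (isOpen_ball.mem_nhds (by simp)))
  have hbd : ∀ s₁ ≤ s, ‖AK (-2) h s‖ ≤ ‖AK (-2) h s₁‖ + Real.pi * M / 3 * Real.exp (3 * s) := by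
    intro s₁ hs₁
    have hk : ‖AK (-2) h s - AK (-2) h s₁‖ ≤ ∫ σ in s₁..s, (Real.pi * M) * Real.exp (3 * σ) := by
      rw [key (-2) hh1 hs₁ hs]
      apply intervalIntegral.norm_integral_le_of_norm_le hs₁ _
        (Continuous.intervalIntegrable (by fun_prop) _ _)
      refine Eventually.of_forall fun σ hσ => ?_
      have hσ0 : σ < 0 := hσ.2.trans_lt hs
      have := intervalIntegral.norm_integral_le_of_norm_le_const (a := 0) (b := 2 * Real.pi)
        (C := M / 2 * Real.exp (3 * σ)) (f := fun t : ℝ => 2 * (wdzbar h (exp (σ + t * I)) * (starRingEnd ℂ) (exp (σ + t * I)) *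
        exp (-(((-2:ℤ):ℂ) * (σ + t * I))))) (by
          intro t ht
          have hz : exp (σ + t * I) ∈ ball (0:ℂ) 1 := exp_mem_ball (by simpa using hσ0)
          have hz2 := hM _ hz
          rw [wdzbar_conj ((h1.differentiableOn one_ne_zero).differentiableAt (isOpen_ball.mem_nhds hz)),
            wdz_wdzbar hf hz]
          rw [norm_mul, norm_mul, norm_mul, norm_conj, norm_conj, norm_exp, norm_exp, norm_div]
          have e : Real.exp (3 * σ) = Real.exp (σ + t * I).re * Real.exp (-(((-2:ℤ):ℂ) * (σ + t * I))).re := by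
            rw [← Real.exp_add]; congr 1; simp; ring
          rw [e]
          have hp := mul_pos (Real.exp_pos (σ + t * I).re) (Real.exp_pos (-(((-2:ℤ):ℂ) * (σ + t * I))).re)
          have hn2 : ‖(2:ℂ)‖ = 2 := by norm_num
          have hn4 : ‖(4:ℂ)‖ = 4 := by norm_num
          rw [hn2, hn4]
          have hq := mul_le_mul_of_nonneg_right hz2 hp.le
          clear e hp
          revert hq
          generalize Real.exp (σ + t * I).re = X
          generalize Real.exp (-(((-2:ℤ):ℂ) * (σ + t * I))).re = Y
          intro hq
          linarith)
      refine this.trans (le_of_eq ?_)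
      rw [sub_zero, abs_of_pos (by positivity)]
      ring
    have e : ∫ σ in s₁..s, (Real.pi * M) * Real.exp (3 * σ) =
        Real.pi * M / 3 * (Real.exp (3 * s) - Real.exp (3 * s₁)) := by
      rw [intervalIntegral.integral_const_mul, intervalIntegral.integral_comp_mul_left (fun x => Real.exp x) (by norm_num), integral_exp]
      simp; ring
    have h3 := norm_sub_norm_le (AK (-2) h s) (AK (-2) h s₁)
    have h4 : 0 ≤ Real.pi * M / 3 * Real.exp (3 * s₁) := by positivity
    rw [e] at hk
    linarith
  have hA : ‖AK (-2) h s‖ ≤ 0 + Real.pi * M / 3 * Real.exp (3 * s) := by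
    refine ge_of_tendsto (hlim.add_const _) ?_
    filter_upwards [Iic_mem_atBot s] with s₁ hs₁ using hbd s₁ hs₁
  rw [HK_norm]
  calc _ ≤ 2 * Real.exp (-2 * s) * (0 + Real.pi * M / 3 * Real.exp (3 * s)) := by gcongr
    _ = 2 * Real.pi * M / 3 * (Real.exp (-2 * s) * Real.exp (3 * s)) := by ring
    _ = _ := by rw [← Real.exp_add]; ring_nf

open Complex in
lemma phi_cont {F : ℂ → ℂ} (k : ℤ) (hF : ContinuousOn F (ball (0:ℂ) 1)) {s : ℝ} (hs : s < 0) :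
    Continuous (fun t : ℝ => PhiK k F (s + t * I)) := by
  unfold PhiK
  refine Continuous.mul ?_ (by fun_prop)
  exact hF.comp_continuous (by fun_prop) (fun t => exp_mem_ball (by simpa using hs))

open Complex in
lemma int_exp2 : ∫ t in (0:ℝ)..(2 * Real.pi), exp ((-2 * I) * t) = 0 := by
  rw [integral_exp_mul_complex (by simp)]
  have : exp (-2 * I * (2 * Real.pi : ℝ)) = 1 := by
    rw [exp_eq_one_iff]; exact ⟨-2, by push_cast; ring⟩
  rw [this]; simp

open Complex in
lemma AK1_lim {f : ℂ → ℂ} (hf : ContDiffOn ℝ 2 f (ball (0:ℂ) 1)) (hf0 : f 0 = 0) :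
    Tendsto (AK 1 f) atBot (nhds (2 * Real.pi * wdz f 0)) := by
  have hd : HasFDerivAt f (fderiv ℝ f 0) 0 :=
    ((hf.differentiableOn two_ne_zero).differentiableAt
      (isOpen_ball.mem_nhds (by simp))).hasFDerivAt
  have hL : ∀ z, fderiv ℝ f 0 z = wdz f 0 * z + wdzbar f 0 * (starRingEnd ℂ) z := by
    intro z
    rw [wirt]
    have hz : (starRingEnd ℂ) z = z.re - z.im * I := by
      apply Complex.ext <;> simp
    have hz2 := re_add_im z
    rw [hz]
    unfold wdz wdzbar
    linear_combination ((fderiv ℝ f 0 1 - I * fderiv ℝ f 0 I)/2) * hz2 + (z.im * fderiv ℝ f 0 I) * I_sq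
  rw [Metric.tendsto_nhds]
  intro ε hε
  have ho := (hasFDerivAt_iff_isLittleO.1 hd).def (c := ε / (4 * Real.pi)) (by positivity)
  obtain ⟨δ, hδ, H⟩ := Metric.eventually_nhds_iff.1 ho
  have : ∀ᶠ s : ℝ in atBot, Real.exp s < δ := Real.tendsto_exp_atBot.eventually (gt_mem_nhds hδ)
  filter_upwards [this, Iio_mem_atBot 0] with s hs hs0
  rw [dist_eq_norm]
  have e : AK 1 f s - 2 * Real.pi * wdz f 0 = ∫ t in (0:ℝ)..(2 * Real.pi),
      (PhiK 1 f (s + t * I) - (wdz f 0 + wdzbar f 0 * exp ((-2 * I) * t))) := by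
    rw [intervalIntegral.integral_sub ((phi_cont 1 hf.continuousOn hs0).intervalIntegrable _ _)
      (Continuous.intervalIntegrable (by fun_prop) _ _),
      intervalIntegral.integral_add (Continuous.intervalIntegrable (by fun_prop) _ _)
      (Continuous.intervalIntegrable (by fun_prop) _ _), intervalIntegral.integral_const_mul, int_exp2]
    simp [AK]
  rw [e]
  have hb := intervalIntegral.norm_integral_le_of_norm_le_const (a := 0) (b := 2 * Real.pi)
    (C := ε / (4 * Real.pi)) (f := fun t : ℝ => 
      (PhiK 1 f (s + t * I) - (wdz f 0 + wdzbar f 0 * exp ((-2 * I) * t)))) (by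
      intro t ht
      have h1 := H (y := exp (s + t * I)) (by simpa [norm_exp] using hs)
      rw [sub_zero, hf0, sub_zero, hL] at h1
      have e2 : exp (s + t * I) * exp (-(s + t * I)) = 1 := by rw [← exp_add]; simp
      have e3 : (starRingEnd ℂ) (exp (s + t * I)) * exp (-(s + t * I)) = exp ((-2 * I) * t) := by
        rw [← exp_conj, ← exp_add]; congr 1; simp; ring
      have e4 : PhiK 1 f (s + t * I) - (wdz f 0 + wdzbar f 0 * exp ((-2 * I) * t)) =
        (f (exp (s + t * I)) - (wdz f 0 * exp (s + t * I) + wdzbar f 0 * (starRingEnd ℂ) (exp (s + t * I)))) * exp (-(s + t * I)) := by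
        unfold PhiK
        push_cast
        rw [one_mul]
        linear_combination wdz f 0 * e2 + wdzbar f 0 * e3
      rw [e4, norm_mul]
      calc _ ≤ ε / (4 * Real.pi) * ‖exp (s + t * I)‖ * ‖exp (-(s + t * I))‖ := by gcongr
        _ = _ := by rw [mul_assoc, ← norm_mul, e2]; simp)
  refine hb.trans_lt ?_
  rw [sub_zero, abs_of_pos (by positivity)]
  have := Real.pi_pos
  field_simp
  norm_num

open Complex in
lemma main_bd {f : ℂ → ℂ} {M : ℝ} (hf : ContDiffOn ℝ 2 f (ball (0:ℂ) 1))
    (hM : ∀ z ∈ ball (0:ℂ) 1, ‖lap f z‖ ≤ M) (hf0 : f 0 = 0) {s : ℝ} (hs : s < 0) :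
    ‖2 * Real.pi * wdz f 0 - AK 1 f s‖ ≤ 2 * Real.pi * M / 3 := by
  have hM0 : 0 ≤ M := (norm_nonneg _).trans (hM 0 (by simp))
  have hbd : ∀ s₁ ≤ s, ‖AK 1 f s₁ - AK 1 f s‖ ≤ 2 * Real.pi * M / 3 := by
    intro s₁ hs₁
    rw [norm_sub_rev, key 1 (hf.of_le (by norm_num)) hs₁ hs]
    have hk := intervalIntegral.norm_integral_le_of_norm_le (μ := volume) (f := HK f)
      (g := fun σ => 2 * Real.pi * M / 3 * Real.exp σ) hs₁
      (Eventually.of_forall fun σ hσ => HK_bound hf hM (hσ.2.trans_lt hs))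
      (Continuous.intervalIntegrable (by fun_prop) _ _)
    refine hk.trans ?_
    rw [intervalIntegral.integral_const_mul, integral_exp]
    have h1 : Real.exp s ≤ 1 := Real.exp_le_one_iff.2 hs.le
    have h2 := Real.exp_pos s₁
    have : 0 ≤ 2 * Real.pi * M / 3 := by positivity
    nlinarith
  refine le_of_tendsto (((AK1_lim hf hf0).sub_const _).norm) ?_
  filter_upwards [Iic_mem_atBot s] with s₁ hs₁ using hbd s₁ hs₁

lemma exists_unimod (p : ℂ) : ∃ u : ℂ, ‖u‖ = 1 ∧ u * p = ‖p‖ := by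
  by_cases hp : p = 0
  · exact ⟨1, by simp, by simp [hp]⟩
  · have : (‖p‖ : ℂ) ≠ 0 := by simpa using hp
    refine ⟨‖p‖ / p, ?_, by field_simp⟩
    rw [norm_div, Complex.norm_real, norm_norm, div_self (by simpa using hp)]

open Complex in
lemma sum_bd {f : ℂ → ℂ} {M₁ M₂ : ℝ} (hf : ContDiffOn ℝ 2 f (ball (0:ℂ) 1))
    (hM : ∀ z ∈ ball (0:ℂ) 1, ‖lap f z‖ ≤ M₁) (hf0 : f 0 = 0)
    (hfb : ∀ z ∈ ball (0:ℂ) 1, ‖f z‖ ≤ M₂) {s : ℝ} (hs : s < 0) :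
    2 * Real.pi * (‖wdz f 0‖ + ‖wdzbar f 0‖) ≤ 8 * M₂ * Real.exp (-s) + 4 * Real.pi * M₁ / 3 := by
  set fb := fun w => (starRingEnd ℂ) (f w) with hfbdef
  have hfb2 : ContDiffOn ℝ 2 fb (ball (0:ℂ) 1) := contDiffOn_conj (n := 2) hf
  have h1 := main_bd hf hM hf0 hs
  have h2 := main_bd (f := fb) hfb2
    (fun z hz => by rw [lap_conj hf hz, norm_conj]; exact hM z hz) (by simp [fb, hf0]) hs
  have hd : DifferentiableAt ℝ f 0 :=
    (hf.differentiableOn two_ne_zero).differentiableAt (isOpen_ball.mem_nhds (by simp))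
  rw [wdz_conj hd] at h2
  set p := wdz f 0
  set q := wdzbar f 0
  set A := AK 1 f s with hA
  set B := (starRingEnd ℂ) (AK 1 fb s) with hB
  have h2' : ‖2 * Real.pi * q - B‖ ≤ 2 * Real.pi * M₁ / 3 := by
    rw [← norm_conj]; simpa [hB, map_ofNat] using h2
  obtain ⟨u, hu, hup⟩ := exists_unimod p
  obtain ⟨v, hv, hvq⟩ := exists_unimod q
  have hcf := phi_cont 1 hf.continuousOn hs
  have hcfb := continuous_conj.comp (phi_cont 1 hfb2.continuousOn hs)
  have hAB : u * A + v * B = ∫ t in (0:ℝ)..(2 * Real.pi),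
      (u * PhiK 1 f (s + t * I) + v * (starRingEnd ℂ) (PhiK 1 fb (s + t * I))) := by
    have i1 : IntervalIntegrable (fun t : ℝ => u * PhiK 1 f (s + t * I)) volume 0 (2 * Real.pi) :=
      (continuous_const.mul hcf).intervalIntegrable _ _
    have i2 : IntervalIntegrable (fun t : ℝ => v * (starRingEnd ℂ) (PhiK 1 fb (s + t * I))) volume
        0 (2 * Real.pi) := (continuous_const.mul hcfb).intervalIntegrable _ _
    rw [intervalIntegral.integral_add i1 i2,
      intervalIntegral.integral_const_mul, intervalIntegral.integral_const_mul,
      intervalIntegral.intervalIntegral_conj]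
    rfl
  have hABn : ‖u * A + v * B‖ ≤ 8 * M₂ * Real.exp (-s) := by
    rw [hAB]
    have := intervalIntegral.norm_integral_le_of_norm_le (μ := volume) (a := 0) (b := 2 * Real.pi)
      (f := fun t : ℝ => (u * PhiK 1 f (s + t * I) + v * (starRingEnd ℂ) (PhiK 1 fb (s + t * I))))
      (g := fun t : ℝ => (M₂ * Real.exp (-s)) * ‖u * exp (-(t * I)) + v * exp (t * I)‖)
      (by positivity)
      (Eventually.of_forall fun t _ => by
        have e : u * PhiK 1 f (s + t * I) + v * (starRingEnd ℂ) (PhiK 1 fb (s + t * I)) =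
          f (exp (s + t * I)) * (Real.exp (-s) : ℝ) * (u * exp (-(t * I)) + v * exp (t * I)) := by
          have a1 : exp (-((1:ℤ) * (s + t * I))) = (Real.exp (-s) : ℝ) * exp (-(t * I)) := by
            rw [ofReal_exp, ← exp_add]; congr 1; push_cast; ring
          have a2 : (starRingEnd ℂ) (exp (-((1:ℤ) * (s + t * I)))) = (Real.exp (-s) : ℝ) * exp (t * I) := by
            rw [ofReal_exp, ← exp_add, ← exp_conj]; congr 1; simp; ring
          unfold PhiK
          rw [map_mul, a2, a1, hfbdef, conj_conj]
          ring
        rw [e, norm_mul, norm_mul, norm_real, Real.norm_of_nonneg (Real.exp_pos _).le]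
        gcongr
        exact hfb _ (exp_mem_ball (by simpa using hs)))
      (Continuous.intervalIntegrable (by fun_prop) _ _)
    refine this.trans (le_of_eq ?_)
    rw [intervalIntegral.integral_const_mul, int_uv u v hu hv]
    ring
  have htot : ((2 * Real.pi * (‖p‖ + ‖q‖) : ℝ) : ℂ) =
      (u * A + v * B) + (u * (2 * Real.pi * p - A) + v * (2 * Real.pi * q - B)) := by
    push_cast
    rw [← hup, ← hvq]; ring
  have hn : ‖((2 * Real.pi * (‖p‖ + ‖q‖) : ℝ) : ℂ)‖ = 2 * Real.pi * (‖p‖ + ‖q‖) := by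
    rw [norm_real, Real.norm_of_nonneg (by positivity)]
  rw [← hn, htot]
  have t1 := norm_add_le (u * A + v * B) (u * (2 * Real.pi * p - A) + v * (2 * Real.pi * q - B))
  have t2 := norm_add_le (u * (2 * Real.pi * p - A)) (v * (2 * Real.pi * q - B))
  rw [norm_mul u, norm_mul v, hu, hv] at t2
  linarith

/-- Lower bound on `λ(D_f(0)) = ||f_z(0)| - |f_{z̄}(0)||` for normalized solutions of
the Poisson equation. -/
theorem stmt14 (M₁ M₂ : ℝ) (hM₁ : 0 ≤ M₁) (hM₂ : 0 < M₂) (g f : ℂ → ℂ)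
    (hg : ContinuousOn g (closedBall (0:ℂ) 1))
    (hf2 : ContDiffOn ℝ 2 f (ball (0:ℂ) 1))
    (hfc : ContinuousOn f (closedBall (0:ℂ) 1))
    (hfg : ∀ z ∈ ball (0:ℂ) 1, lap f z = g z)
    (hf0 : f 0 = 0)
    (hJ : ‖wdz f 0‖ ^ 2 - ‖wdzbar f 0‖ ^ 2 = 1)
    (hgb : ∀ z ∈ ball (0:ℂ) 1, ‖g z‖ ≤ M₁)
    (hfb : ∀ z ∈ ball (0:ℂ) 1, ‖f z‖ ≤ M₂) :
    |‖wdz f 0‖ - ‖wdzbar f 0‖| ≥ 1 / (4 / Real.pi * M₂ + 2 / 3 * M₁) := by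
  have hpi := Real.pi_pos
  have hlim : 2 * Real.pi * (‖wdz f 0‖ + ‖wdzbar f 0‖) ≤ 8 * M₂ * Real.exp (-0) + 4 * Real.pi * M₁ / 3 := by
    have hc : Continuous (fun s : ℝ => 8 * M₂ * Real.exp (-s) + 4 * Real.pi * M₁ / 3) := by fun_prop
    refine ge_of_tendsto (hc.continuousAt.tendsto.mono_left (nhdsWithin_le_nhds (s := Iio 0))) ?_
    filter_upwards [self_mem_nhdsWithin] with s hs
    exact sum_bd hf2 (fun z hz => by rw [hfg z hz]; exact hgb z hz) hf0 hfb hs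
  rw [neg_zero, Real.exp_zero, mul_one] at hlim
  have hS : ‖wdz f 0‖ + ‖wdzbar f 0‖ ≤ 4 / Real.pi * M₂ + 2 / 3 * M₁ := by
    have : 2 * Real.pi * (4 / Real.pi * M₂ + 2 / 3 * M₁) = 8 * M₂ + 4 * Real.pi * M₁ / 3 := by
      field_simp; ring
    rw [← this] at hlim
    exact le_of_mul_le_mul_left hlim (by positivity)
  have hD : 0 < 4 / Real.pi * M₂ + 2 / 3 * M₁ := by positivity
  rw [ge_iff_le, div_le_iff₀ hD]
  have h1 : (‖wdz f 0‖ - ‖wdzbar f 0‖) * (‖wdz f 0‖ + ‖wdzbar f 0‖) = 1 := by linarith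
  calc (1:ℝ) = (‖wdz f 0‖ - ‖wdzbar f 0‖) * (‖wdz f 0‖ + ‖wdzbar f 0‖) := h1.symm
    _ ≤ |‖wdz f 0‖ - ‖wdzbar f 0‖| * (‖wdz f 0‖ + ‖wdzbar f 0‖) := by
      gcongr; exact le_abs_self _
    _ ≤ _ := by gcongr
end
end
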